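/- Let V be an irreducible integrable 𝔏(A)-module with finite-dimensional weight spaces on which the affine center K⊗1 acts trivially. Then there exists a cofinite ideal R of A such that (𝔏⊗R)·V = 0. -/

import Mathlib

noncomputable section

/-!
Common setup: a realization of the loop affine-Virasoro algebra
`𝔏(A) = ((g̊ ⊗ ℂ[t,t⁻¹] ⊕ ℂK) ⋊ Vir) ⊗ A`.

* `g` plays the role of the finite dimensional simple Lie algebra `g̊`.
* `A` is a commutative associative unital `ℂ`-algebra.
* `L` plays the role of `𝔏(A)`; the structure fields record the generators
  `E n x a = (x ⊗ tⁿ) ⊗ a`, `D n a = dₙ ⊗ a`, `K a = K ⊗ a`, `C a = C ⊗ a`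
  together with the defining bracket relations, and the fact that the
  generators span `L`.
-/

/-- An ideal of a `ℂ`-algebra is cofinite if the quotient is finite dimensional. -/
def IsCofiniteIdeal {A : Type*} [CommRing A] [Algebra ℂ A] (I : Ideal A) : Prop :=
  FiniteDimensional ℂ (A ⧸ I)

/-- A realization of the loop affine-Virasoro algebra `𝔏(A)`. -/
structure LoopAffVir (g : Type*) [LieRing g] [LieAlgebra ℂ g]
    (A : Type*) [CommRing A] [Algebra ℂ A]
    (L : Type*) [LieRing L] [LieAlgebra ℂ L] : Type _ where
  /-- the Cartan subalgebra `h̊` of `g̊` -/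
  H : LieSubalgebra ℂ g
  isCartan : H.IsCartanSubalgebra
  /-- the invariant nondegenerate symmetric bilinear form on `g̊` -/
  form : g →ₗ[ℂ] g →ₗ[ℂ] ℂ
  form_symm : ∀ x y : g, form x y = form y x
  form_nondeg : ∀ x : g, (∀ y : g, form x y = 0) → x = 0
  form_invariant : ∀ x y z : g, form ⁅x, y⁆ z = form x ⁅y, z⁆
  /-- the root space `g̊_α` -/
  rootSp : Module.Dual ℂ H → Submodule ℂ g
  rootSp_def : ∀ (α : Module.Dual ℂ H) (x : g),
      x ∈ rootSp α ↔ ∀ h : H, ⁅(h : g), x⁆ = α h • x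
  /-- a choice of positive roots `Δ̊₊` -/
  Δplus : Set (Module.Dual ℂ H)
  Δplus_root : ∀ α ∈ Δplus, α ≠ 0 ∧ rootSp α ≠ ⊥
  Δplus_cover : ∀ α : Module.Dual ℂ H, α ≠ 0 → rootSp α ≠ ⊥ → α ∈ Δplus ∨ -α ∈ Δplus
  Δplus_disj : ∀ α ∈ Δplus, -α ∉ Δplus
  /-- `E n x a = (x ⊗ tⁿ) ⊗ a` -/
  E : ℤ → g →ₗ[ℂ] A →ₗ[ℂ] L
  /-- `D n a = dₙ ⊗ a` -/
  D : ℤ → A →ₗ[ℂ] L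
  /-- `K a = K ⊗ a` (affine center) -/
  K : A →ₗ[ℂ] L
  /-- `C a = C ⊗ a` (Virasoro center) -/
  C : A →ₗ[ℂ] L
  lie_EE : ∀ (n m : ℤ) (x y : g) (a b : A),
      ⁅E n x a, E m y b⁆ = E (n + m) ⁅x, y⁆ (a * b)
        + (if m = -n then (n : ℂ) * form x y else 0) • K (a * b)
  lie_DE : ∀ (n m : ℤ) (x : g) (a b : A),
      ⁅D n a, E m x b⁆ = (m : ℂ) • E (m + n) x (a * b)
  lie_DD : ∀ (n m : ℤ) (a b : A),
      ⁅D n a, D m b⁆ = ((m : ℂ) - (n : ℂ)) • D (n + m) (a * b)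
        + (if m = -n then (((n : ℂ) ^ 3 - (n : ℂ)) / 12) else 0) • C (a * b)
  K_central : ∀ (a : A) (z : L), ⁅K a, z⁆ = 0
  C_central : ∀ (a : A) (z : L), ⁅C a, z⁆ = 0
  span_top : Submodule.span ℂ
      ({z : L | ∃ (n : ℤ) (x : g) (a : A), z = E n x a}
        ∪ {z : L | ∃ (n : ℤ) (a : A), z = D n a}
        ∪ {z : L | ∃ a : A, z = K a}
        ∪ {z : L | ∃ a : A, z = C a}) = ⊤

namespace LoopAffVir

variable {g A L : Type*} [LieRing g] [LieAlgebra ℂ g] [CommRing A] [Algebra ℂ A]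
  [LieRing L] [LieAlgebra ℂ L] (S : LoopAffVir g A L)

/-- Generators of the Cartan subalgebra `h̄ = h̊ ⊕ ℂK ⊕ ℂd₀ ⊕ ℂC ⊆ 𝔏 ⊗ 1`. -/
def cartanSet : Set L :=
  {z : L | ∃ h ∈ S.H, z = S.E 0 h 1} ∪ {S.K 1, S.D 0 1, S.C 1}

/-- The Cartan subalgebra `h̄` of `𝔏(A)`. -/
def cartan : Submodule ℂ L := Submodule.span ℂ S.cartanSet

/-- `h ∈ h̊` as an element of `h̄`. -/
def eH (h : S.H) : S.cartan :=
  ⟨S.E 0 h 1, Submodule.subset_span (Set.mem_union_left _ ⟨(h : g), h.2, rfl⟩)⟩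

/-- `K ⊗ 1` as an element of `h̄`. -/
def K1 : S.cartan :=
  ⟨S.K 1, Submodule.subset_span (Set.mem_union_right _ (by simp))⟩

/-- `d₀ ⊗ 1` as an element of `h̄`. -/
def d0 : S.cartan :=
  ⟨S.D 0 1, Submodule.subset_span (Set.mem_union_right _ (by simp))⟩

/-- `C ⊗ 1` as an element of `h̄`. -/
def C1 : S.cartan :=
  ⟨S.C 1, Submodule.subset_span (Set.mem_union_right _ (by simp))⟩

variable (V : Type*) [AddCommGroup V] [Module ℂ V] [LieRingModule L V] [LieModule ℂ L V]

/-- The weight space of an `𝔏(A)`-module attached to `χ ∈ h̄*`. -/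
def wtSpace (χ : Module.Dual ℂ S.cartan) : Submodule ℂ V where
  carrier := {v : V | ∀ h : S.cartan, ⁅(h : L), v⁆ = χ h • v}
  add_mem' := by
    intro a b ha hb h
    rw [lie_add, ha h, hb h, smul_add]
  zero_mem' := by
    intro h
    rw [lie_zero, smul_zero]
  smul_mem' := by
    intro c v hv h
    rw [lie_smul, hv h, smul_comm]

/-- The set of weights `P(V)`. -/
def weights : Set (Module.Dual ℂ S.cartan) := {χ | S.wtSpace V χ ≠ ⊥}

/-- `V` is a weight module: it is the (direct) sum of its weight spaces. -/
def IsWeightModule : Prop := (⨆ χ : Module.Dual ℂ S.cartan, S.wtSpace V χ) = ⊤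

/-- All weight spaces are finite dimensional. -/
def HasFinDimWeightSpaces : Prop :=
  ∀ χ : Module.Dual ℂ S.cartan, FiniteDimensional ℂ (S.wtSpace V χ)

/-- Integrability: `V` is a weight module with finite dimensional weight spaces on which all
real root vectors `(x ⊗ tⁿ) ⊗ a`, `x ∈ g̊_α`, `α ∈ Δ̊`, act locally nilpotently. -/
def IsIntegrable : Prop :=
  S.IsWeightModule V ∧ S.HasFinDimWeightSpaces V ∧
    ∀ α : Module.Dual ℂ S.H, α ≠ 0 → S.rootSp α ≠ ⊥ →
      ∀ x ∈ S.rootSp α, ∀ (n : ℤ) (a : A) (v : V),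
        ∃ N : ℕ, ((LieModule.toEnd ℂ L V) (S.E n x a) ^ N) v = 0

/-- The highest weight space
`M = {v ∈ V : (x ⊗ tⁿ ⊗ a) v = 0 ∀ x ∈ g̊_α, α ∈ Δ̊₊, n ∈ ℤ, a ∈ A}` for the second
triangular decomposition. -/
def hwSpace : Submodule ℂ V where
  carrier := {v : V | ∀ α ∈ S.Δplus, ∀ x ∈ S.rootSp α, ∀ (n : ℤ) (a : A), ⁅S.E n x a, v⁆ = 0}
  add_mem' := by
    intro u w hu hw α hα x hx n a
    rw [lie_add, hu α hα x hx n a, hw α hα x hx n a, add_zero]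
  zero_mem' := by
    intro α hα x hx n a
    rw [lie_zero]
  smul_mem' := by
    intro t v hv α hα x hx n a
    rw [lie_smul, hv α hα x hx n a, smul_zero]

/-- Generators of `𝔏(A)⁺ = (n₊ ⊕ Vir⁺) ⊗ A` for the natural triangular decomposition. -/
def plusSet : Set L :=
  {z : L | ∃ n : ℤ, 0 < n ∧ ∃ (x : g) (a : A), z = S.E n x a} ∪
  {z : L | ∃ α ∈ S.Δplus, ∃ x ∈ S.rootSp α, ∃ a : A, z = S.E 0 x a} ∪
  {z : L | ∃ n : ℤ, 0 < n ∧ ∃ a : A, z = S.D n a}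

/-- Generators of `𝔏(A)⁻ = (n₋ ⊕ Vir⁻) ⊗ A` for the natural triangular decomposition. -/
def minusSet : Set L :=
  {z : L | ∃ n : ℤ, n < 0 ∧ ∃ (x : g) (a : A), z = S.E n x a} ∪
  {z : L | ∃ α ∈ S.Δplus, ∃ x ∈ S.rootSp (-α), ∃ a : A, z = S.E 0 x a} ∪
  {z : L | ∃ n : ℤ, n < 0 ∧ ∃ a : A, z = S.D n a}

/-- Generators of `𝔏(A)⁰ = h̄ ⊗ A`. -/
def cartanASet : Set L :=
  {z : L | ∃ h ∈ S.H, ∃ a : A, z = S.E 0 h a} ∪ {z : L | ∃ a : A, z = S.K a}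
    ∪ {z : L | ∃ a : A, z = S.D 0 a} ∪ {z : L | ∃ a : A, z = S.C a}

/-- `𝔏(A)⁰ = h̄ ⊗ A` as a subspace of `L`. -/
def cartanA : Submodule ℂ L := Submodule.span ℂ S.cartanASet

/-- `h ⊗ a`, `h ∈ h̊`, as an element of `h̄ ⊗ A`. -/
def eHA (h : S.H) (a : A) : S.cartanA :=
  ⟨S.E 0 h a, Submodule.subset_span
    (Set.mem_union_left _ (Set.mem_union_left _ (Set.mem_union_left _ ⟨(h : g), h.2, a, rfl⟩)))⟩

/-- `K ⊗ a` as an element of `h̄ ⊗ A`. -/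
def KA (a : A) : S.cartanA :=
  ⟨S.K a, Submodule.subset_span
    (Set.mem_union_left _ (Set.mem_union_left _ (Set.mem_union_right _ ⟨a, rfl⟩)))⟩

/-- `d₀ ⊗ a` as an element of `h̄ ⊗ A`. -/
def DA0 (a : A) : S.cartanA :=
  ⟨S.D 0 a, Submodule.subset_span (Set.mem_union_left _ (Set.mem_union_right _ ⟨a, rfl⟩))⟩

/-- `C ⊗ a` as an element of `h̄ ⊗ A`. -/
def CA (a : A) : S.cartanA :=
  ⟨S.C a, Submodule.subset_span (Set.mem_union_right _ ⟨a, rfl⟩)⟩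

/-- `V` is a highest weight module with highest weight `ψ : h̄ ⊗ A → ℂ` for the natural
triangular decomposition: some nonzero vector `v` is annihilated by `𝔏(A)⁺`, is a
`ψ`-eigenvector for `h̄ ⊗ A`, and generates `V`. -/
def IsHWModule (ψ : Module.Dual ℂ S.cartanA) : Prop :=
  ∃ v : V, v ≠ 0 ∧ (∀ z ∈ S.plusSet, ⁅z, v⁆ = 0) ∧
    (∀ h : S.cartanA, ⁅(h : L), v⁆ = ψ h • v) ∧
    ∀ W : LieSubmodule ℂ L V, v ∈ W → W = ⊤

/-- `(𝔏 ⊗ I) ⬝ V = 0`. -/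
def Annihilates (I : Ideal A) : Prop :=
  ∀ a ∈ I, (∀ (n : ℤ) (x : g) (v : V), ⁅S.E n x a, v⁆ = 0) ∧
    (∀ (n : ℤ) (v : V), ⁅S.D n a, v⁆ = 0) ∧
    (∀ v : V, ⁅S.K a, v⁆ = 0) ∧ (∀ v : V, ⁅S.C a, v⁆ = 0)

/-- `(𝔏₀ ⊗ R)` kills the subspace `X`, where `𝔏₀ = (h̊ ⊗ ℂ[t,t⁻¹] ⊕ ℂK) ⋊ Vir`. -/
def ZeroPartAnnOn (R : Ideal A) (X : Submodule ℂ V) : Prop :=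
  ∀ a ∈ R, ∀ v ∈ X,
    (∀ (n : ℤ) (h : g), h ∈ S.H → ⁅S.E n h a, v⁆ = 0) ∧
    (∀ n : ℤ, ⁅S.D n a, v⁆ = 0) ∧ ⁅S.K a, v⁆ = 0 ∧ ⁅S.C a, v⁆ = 0

/-- Generators of `𝔏(A)₀ = ((h̊ ⊗ ℂ[t,t⁻¹] ⊕ ℂK) ⋊ Vir) ⊗ A`. -/
def zeroPartSet : Set L :=
  {z : L | ∃ (n : ℤ) (h : g), h ∈ S.H ∧ ∃ a : A, z = S.E n h a}
    ∪ {z : L | ∃ a : A, z = S.K a}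
    ∪ {z : L | ∃ (n : ℤ) (a : A), z = S.D n a}
    ∪ {z : L | ∃ a : A, z = S.C a}

/-- Generators of `g(A) = (g̊ ⊗ ℂ[t,t⁻¹] ⊕ ℂK ⊕ ℂd₀) ⊗ A`. -/
def gASet : Set L :=
  {z : L | ∃ (n : ℤ) (x : g) (a : A), z = S.E n x a}
    ∪ {z : L | ∃ a : A, z = S.K a} ∪ {z : L | ∃ a : A, z = S.D 0 a}

/-- Generators of `(h̊ ⊗ ℂ[t,t⁻¹] ⊕ ℂK) ⊗ A`. -/
def heisSet : Set L :=
  {z : L | ∃ (n : ℤ) (h : g), h ∈ S.H ∧ ∃ a : A, z = S.E n h a}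
    ∪ {z : L | ∃ a : A, z = S.K a}

/-- The smallest subspace of `V` containing `X` and stable under the operators in `Ops`;
this models `U(⋯) ⬝ X`. -/
def opClosure (Ops : Set L) (X : Submodule ℂ V) : Submodule ℂ V :=
  sInf {N : Submodule ℂ V | X ≤ N ∧ ∀ z ∈ Ops, ∀ v ∈ N, ⁅z, v⁆ ∈ N}

/-- The reflection `λ ↦ λ - λ(b) • β` on `h̄*`. -/
def reflMap (b : S.cartan) (β : Module.Dual ℂ S.cartan) :
    Module.End ℂ (Module.Dual ℂ S.cartan) :=
  LinearMap.id - LinearMap.smulRight (Module.Dual.eval ℂ S.cartan b) β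

/-- Given `ν⁻¹ : h̊* → h̊` (inverse of the form), the coroot
`β∨ = α∨ + (2 / ⟨α,α⟩) K ∈ h̄` of the real root `β = α + nδ`. -/
def corootOf (nu : Module.Dual ℂ S.H → S.H) (α : Module.Dual ℂ S.H) : S.cartan :=
  (2 / α (nu α)) • (S.eH (nu α) + S.K1)

/-- The (affine) Weyl group `W` of `𝔏(A)`, generated by the reflections in the real
roots `β = α + nδ`, acting on `h̄*`. -/
def weylMonoid (nu : Module.Dual ℂ S.H → S.H)
    (ext : Module.Dual ℂ S.H →ₗ[ℂ] Module.Dual ℂ S.cartan)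
    (δf : Module.Dual ℂ S.cartan) :
    Submonoid (Module.End ℂ (Module.Dual ℂ S.cartan)) :=
  Submonoid.closure {w | ∃ (α : Module.Dual ℂ S.H) (n : ℤ), α ≠ 0 ∧ S.rootSp α ≠ ⊥ ∧
    w = S.reflMap (S.corootOf nu α) (ext α + (n : ℂ) • δf)}

/-- The reflection `σ_α : h ↦ h - α(h) • α∨` on `h̊`. -/
def finReflMap (nu : Module.Dual ℂ S.H → S.H) (α : Module.Dual ℂ S.H) :
    Module.End ℂ S.H :=
  LinearMap.id - LinearMap.smulRight (α : S.H →ₗ[ℂ] ℂ) ((2 / α (nu α)) • nu α)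

/-- The finite Weyl group `W̊` of `g̊`, acting on `h̊`. -/
def finWeyl (nu : Module.Dual ℂ S.H → S.H) : Submonoid (Module.End ℂ S.H) :=
  Submonoid.closure {w | ∃ α : Module.Dual ℂ S.H, α ≠ 0 ∧ S.rootSp α ≠ ⊥ ∧
    w = S.finReflMap nu α}

/-- `ℤ[W̊(θ∨)] ⊆ h̊`: the additive group generated by the `W̊`-orbit of `θ∨`. -/
def thetaOrbitSpan (nu : Module.Dual ℂ S.H → S.H) (θ : Module.Dual ℂ S.H) :
    AddSubgroup S.H :=
  AddSubgroup.closure {h | ∃ w ∈ S.finWeyl nu, h = w ((2 / θ (nu θ)) • nu θ)}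

/-- The `d₀`-eigenspace of `V` for the eigenvalue `μ`. -/
def d0Eig (μ : ℂ) : Submodule ℂ V where
  carrier := {v : V | ⁅S.D 0 1, v⁆ = μ • v}
  add_mem' := by
    intro a b ha hb
    show ⁅S.D 0 1, a + b⁆ = μ • (a + b)
    rw [lie_add, ha, hb, smul_add]
  zero_mem' := by
    show ⁅S.D 0 1, (0 : V)⁆ = μ • (0 : V)
    rw [lie_zero, smul_zero]
  smul_mem' := by
    intro c v hv
    show ⁅S.D 0 1, c • v⁆ = μ • c • v
    rw [lie_smul, hv, smul_comm]

end LoopAffVir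

end

/-!
It suffices to find a cofinite ideal `I` such that all `(x ⊗ tⁿ) ⊗ a` and `dₙ ⊗ a` with `a ∈ I`
kill one nonzero vector. By irreducibility `𝔏 ⊗ I²` then kills `V`: the square accounts for `K` and
`C`, which arise from brackets of the other generators. And `I²` is again cofinite, since `A` is
Noetherian.

Suppose that `V` has a nonzero `h̊`-weight `l`. As `K` acts by zero, each real root `α + nδ` gives
an `𝔰𝔩₂`-triple whose coroot acts as the coroot of `α` does. Choose `α` so that `p = l(α^∨)` is
positive. Then `p` steps along `-α` followed by `p` steps along `α + mδ` map the joint eigenspace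
of `h̊` and `d₀` for `(l, μ)` injectively into the one for `(l, μ + pm)`, for every `m ∈ ℤ`, so
that the dimensions for `(l, μ + j)`, `j ∈ ℤ`, are bounded. The annihilators `Jⱼ ⊆ A` of such an
eigenspace under the `dⱼ ⊗ A` satisfy `Jᵢ Jⱼ ⊆ Jᵢ₊ⱼ` for `i ≠ ±j` and, by the bound, have
codimension at most some `D`. In a quotient of dimension at most `D` the powers of an ideal are
stationary from the `D`-th on, hence `J₁ᴰ J₂ ⊆ Jⱼ` for all `j ≥ 2`, and similarly for `j ≤ -2`.
This gives one ideal for all `dⱼ`, and bracketing `dⱼ` with the finitely many directions of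
`g̊ ⊗ t` extends it to `g̊ ⊗ ℂ[t,t⁻¹]`.

If all `h̊`-weights vanish, `g̊ ⊗ ℂ[t,t⁻¹] ⊗ A` acts by zero and `V` is an irreducible module over
`Vir ⊗ A`. When the dimensions of the weight spaces are bounded, the previous argument applies.
When they are not, say below `μ`, a dimension count yields a nonzero weight vector killed by
`dₘ ⊗ A` for all large `m`. Among such vectors there is either one of highest weight, which is
killed by `dⱼ ⊗ I` for all `j` as soon as it is killed by `d₋₁ ⊗ I` and `d₋₂ ⊗ I`, or one of a
weight so high that all of `Vir ⊗ A` kills it.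
-/

section CofiniteIdeals

variable {k A : Type*} [Field k] [CommRing A] [Algebra k A]

lemma exists_fg_codisjoint_of_cofg {M : Type*} [AddCommGroup M] [Module k M] {S : Submodule k M}
    (hS : S.CoFG) : ∃ T : Submodule k M, T.FG ∧ Codisjoint T S := by
  obtain ⟨T, hT⟩ := S.exists_isCompl
  exact ⟨T, hS.fg_of_isCompl hT, hT.codisjoint.symm⟩

lemma cofg_ker_and_finrank_le {M X V : Type*} [AddCommGroup M] [Module k M] [AddCommGroup X]
    [Module k X] [FiniteDimensional k X] [AddCommGroup V] [Module k V] (T : M →ₗ[k] X →ₗ[k] V)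
    (W : Submodule k V) [FiniteDimensional k W] (hW : ∀ m x, T m x ∈ W) :
    (LinearMap.ker T).CoFG ∧ Module.finrank k (M ⧸ LinearMap.ker T) ≤
      Module.finrank k X * Module.finrank k W := by
  let inclusion : (X →ₗ[k] W) →ₗ[k] X →ₗ[k] V := W.subtype.compRight k
  have inclusion_injective : Function.Injective inclusion := fun f g h ↦
    LinearMap.ext fun x ↦ Subtype.ext (LinearMap.congr_fun h x)
  have range_le : LinearMap.range T ≤ LinearMap.range inclusion := by
    rintro _ ⟨m, rfl⟩
    exact ⟨(T m).codRestrict W (hW m), rfl⟩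
  have : FiniteDimensional k (LinearMap.range T) := Submodule.finiteDimensional_of_le range_le
  refine ⟨Submodule.range_fg_iff_ker_cofg.mp (Module.Finite.iff_fg.mp this), ?_⟩
  calc Module.finrank k (M ⧸ LinearMap.ker T)
      = Module.finrank k (LinearMap.range T) := T.quotKerEquivRange.finrank_eq
    _ ≤ Module.finrank k (LinearMap.range inclusion) := Submodule.finrank_mono range_le
    _ = Module.finrank k X * Module.finrank k W := by
      rw [LinearMap.finrank_range_of_inj inclusion_injective, Module.finrank_linearMap]

lemma cofg_restrictScalars_iff {I : Ideal A} :
    (I.restrictScalars k).CoFG ↔ Module.Finite k (A ⧸ I) :=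
  Iff.rfl

lemma finite_quotient_inf {I J : Ideal A} (hI : Module.Finite k (A ⧸ I))
    (hJ : Module.Finite k (A ⧸ J)) : Module.Finite k (A ⧸ I ⊓ J) := by
  rw [← cofg_restrictScalars_iff] at hI hJ ⊢
  rw [Submodule.restrictScalars_inf]
  exact hI.inf hJ

lemma finite_quotient_mul {I J : Ideal A} (hfg : I.FG) (hI : Module.Finite k (A ⧸ I))
    (hJ : Module.Finite k (A ⧸ J)) : Module.Finite k (A ⧸ I * J) := by
  rw [← cofg_restrictScalars_iff] at hI hJ ⊢
  obtain ⟨S, hS, hSI⟩ := exists_fg_codisjoint_of_cofg hI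
  obtain ⟨T, hT, hTJ⟩ := exists_fg_codisjoint_of_cofg hJ
  obtain ⟨s, rfl⟩ := hfg
  set G := Submodule.span k (s : Set A)
  have span_eq : (Ideal.span (s : Set A)).restrictScalars k = G * ⊤ := by
    rw [mul_comm, ← Submodule.span_univ (R := k), Submodule.span_mul_span]
    exact (Submodule.span_smul_of_span_eq_top Submodule.span_univ (s : Set A)).symm
  have G_le : G ≤ (Ideal.span (s : Set A)).restrictScalars k :=
    Submodule.span_le.mpr Ideal.subset_span
  have hfg : (S ⊔ G * T).FG := hS.sup ((Submodule.fg_span s.finite_toSet).mul hT)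
  refine hfg.cofg_of_codisjoint (codisjoint_iff.mpr (top_le_iff.mp ?_))
  calc ⊤ = S ⊔ G * (T ⊔ J.restrictScalars k) := by
        rw [hTJ.eq_top, ← span_eq, hSI.eq_top]
    _ = S ⊔ G * T ⊔ G * J.restrictScalars k := by rw [Submodule.mul_sup, sup_assoc]
    _ ≤ S ⊔ G * T ⊔ (Ideal.span (s : Set A) * J).restrictScalars k := by
        rw [Ideal.restrictScalars_mul]
        exact sup_le_sup_left (mul_le_mul_left G_le _) _

lemma finite_quotient_pow {I : Ideal A} (hfg : I.FG) (hI : Module.Finite k (A ⧸ I)) (n : ℕ) :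
    Module.Finite k (A ⧸ I ^ n) := by
  induction n with
  | zero =>
    rw [← cofg_restrictScalars_iff, pow_zero, Ideal.one_eq_top, Submodule.restrictScalars_top]
    exact Submodule.CoFG.top
  | succ n ih =>
    rw [pow_succ']
    exact finite_quotient_mul hfg hI ih

lemma exists_pow_succ_eq_pow {Q : Type*} [CommRing Q] [Algebra k Q] [FiniteDimensional k Q]
    (J : Ideal Q) : ∃ n ≤ Module.finrank k Q, J ^ (n + 1) = J ^ n := by
  by_contra! h
  have key : ∀ n ≤ Module.finrank k Q + 1,
      Module.finrank k ((J ^ n).restrictScalars k) + n ≤ Module.finrank k Q := by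
    intro n hn
    induction n with
    | zero => exact Submodule.finrank_le _
    | succ n ih =>
      have lt : (J ^ (n + 1)).restrictScalars k < (J ^ n).restrictScalars k :=
        (Ideal.pow_le_pow_right n.le_succ).lt_of_ne (h n (by omega))
      have := Submodule.finrank_lt_finrank_of_lt lt
      have := ih (by omega)
      omega
  have := key _ le_rfl
  omega

lemma pow_le_pow_of_finrank_le {Q : Type*} [CommRing Q] [Algebra k Q] [FiniteDimensional k Q]
    (J : Ideal Q) {D : ℕ} (hD : Module.finrank k Q ≤ D) (s : ℕ) : J ^ D ≤ J ^ s := by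
  obtain ⟨n, hn, hstab⟩ := exists_pow_succ_eq_pow (k := k) J
  have pow_add_eq (i : ℕ) : J ^ (n + i) = J ^ n := by
    induction i with
    | zero => rfl
    | succ i ih => rw [← add_assoc, pow_succ, ih, ← pow_succ, hstab]
  calc J ^ D ≤ J ^ n := Ideal.pow_le_pow_right (hn.trans hD)
    _ = J ^ (n + s) := (pow_add_eq s).symm
    _ ≤ J ^ s := Ideal.pow_le_pow_right (Nat.le_add_left s n)

lemma pow_mul_le_of_finrank_le {J K L : Ideal A} [Module.Finite k (A ⧸ L)] {D : ℕ}
    (hD : Module.finrank k (A ⧸ L) ≤ D) {s : ℕ} (h : J ^ s * K ≤ L) : J ^ D * K ≤ L := by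
  have pow_le : J ^ D ≤ J ^ s ⊔ L := by
    have := Ideal.comap_mono (f := Ideal.Quotient.mk L)
      (pow_le_pow_of_finrank_le (J.map (Ideal.Quotient.mk L)) hD s)
    rw [← Ideal.map_pow, ← Ideal.map_pow, Ideal.comap_map_quotientMk,
      Ideal.comap_map_quotientMk] at this
    exact (le_sup_right.trans this).trans_eq (sup_comm ..)
  calc J ^ D * K ≤ (J ^ s ⊔ L) * K := Ideal.mul_mono_left pow_le
    _ = J ^ s * K ⊔ L * K := Ideal.sup_mul ..
    _ ≤ L := sup_le h Ideal.mul_le_left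

/-- The conductor `{b | b A ⊆ B}` of a subalgebra `B`, the largest ideal contained in `B`. -/
def conductorIdeal (B : Subalgebra k A) : Ideal A where
  carrier := {b | ∀ a, b * a ∈ B}
  add_mem' hx hy a := by rw [add_mul]; exact B.add_mem (hx a) (hy a)
  zero_mem' a := by rw [zero_mul]; exact B.zero_mem
  smul_mem' c x hx a := by rw [smul_eq_mul, mul_comm c x, mul_assoc]; exact hx _

lemma mem_of_mem_conductorIdeal (B : Subalgebra k A) {b : A} (hb : b ∈ conductorIdeal B) : b ∈ B :=
  mul_one b ▸ hb 1

lemma finite_quotient_conductorIdeal {B : Subalgebra k A} (hB : B.toSubmodule.CoFG) :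
    Module.Finite k (A ⧸ conductorIdeal B) := by
  obtain ⟨T, hT, hTB⟩ := exists_fg_codisjoint_of_cofg hB
  have := Module.Finite.iff_fg.mpr hT
  let mulOnT : A →ₗ[k] T →ₗ[k] A ⧸ B.toSubmodule :=
    ((LinearMap.mul k A).compr₂ B.toSubmodule.mkQ).compl₂ T.subtype
  rw [← cofg_restrictScalars_iff]
  refine (hB.inf (Submodule.CoFG.ker mulOnT)).of_le ?_
  rintro b ⟨hbB, hbT⟩ a
  obtain ⟨t, ht, b', hb', rfl⟩ := Submodule.mem_sup.mp (hTB.eq_top ▸ Submodule.mem_top (x := a))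
  have mul_t_mem : b * t ∈ B := by
    simpa [mulOnT] using LinearMap.congr_fun hbT ⟨t, ht⟩
  rw [mul_add]
  exact B.add_mem mul_t_mem (B.mul_mem hbB hb')

end CofiniteIdeals

lemma of_add_of_consecutive {P : ℕ → Prop} (hadd : ∀ i j, i ≠ j → P i → P j → P (i + j)) {n : ℕ}
    (hn : 0 < n) (h0 : P n) (h1 : P (n + 1)) {m : ℕ} (hm : n * (n + 1) < m) : P m := by
  have combination (a b : ℕ) : P ((a + 1) * n + (b + 1) * (n + 1)) := by
    induction a with
    | zero =>
      induction b with
      | zero => simpa using hadd n (n + 1) (by omega) h0 h1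
      | succ b ih =>
        have := hadd _ _ (by nlinarith) ih h1
        rwa [add_assoc, ← add_one_mul] at this
    | succ a ih =>
      have := hadd _ _ (by nlinarith) h0 ih
      rwa [← add_assoc, ← one_add_mul, add_comm 1] at this
  obtain ⟨n, rfl⟩ := Nat.exists_eq_succ_of_ne_zero hn.ne'
  obtain ⟨a, b, hab⟩ := Nat.exists_add_mul_eq_of_gcd_dvd_of_mul_pred_le (n + 1) (n + 2)
    (m - (2 * n + 3)) (by simp [show n + 2 = n + 1 + 1 from rfl])
    (Nat.le_sub_of_add_le (by simp only [Nat.pred_succ]; nlinarith only [hm]))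
  have two_mul_add_le : 2 * n + 3 ≤ m := by nlinarith only [hm]
  have : m = (a + 1) * (n + 1) + (b + 1) * (n + 2) := by
    linarith only [hab, Nat.sub_add_cancel two_mul_add_le]
  exact this ▸ combination a b

/-- A representation on `V` of the loop Virasoro algebra `Vir ⊗ A`, given by its generating
operators. -/
structure VirRep (k A V : Type*) [Field k] [CommRing A] [Algebra k A] [AddCommGroup V]
    [Module k V] where
  /-- the action of `dₙ ⊗ a` -/
  d : ℤ → A →ₗ[k] Module.End k V
  /-- the action of `C ⊗ a` -/
  c : A →ₗ[k] Module.End k V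
  lie_d_d : ∀ (n m : ℤ) (a b : A), ⁅d n a, d m b⁆ = ((m : k) - n) • d (n + m) (a * b)
    + (if m = -n then ((n : k) ^ 3 - n) / 12 else 0) • c (a * b)
  commute_c_d : ∀ (a : A) (n : ℤ) (b : A), Commute (c a) (d n b)

namespace VirRep

open Filter Module

section Field

variable {k A V : Type*} [Field k] [CommRing A] [Algebra k A] [AddCommGroup V] [Module k V]
  {ρ : VirRep k A V}

lemma d_d_apply (n m : ℤ) (a b : A) (v : V) :
    ρ.d n a (ρ.d m b v) = ρ.d m b (ρ.d n a v) + ((m : k) - n) • ρ.d (n + m) (a * b) v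
      + (if m = -n then ((n : k) ^ 3 - n) / 12 else 0) • ρ.c (a * b) v := by
  rw [add_assoc, ← sub_eq_iff_eq_add']
  exact LinearMap.congr_fun (ρ.lie_d_d n m a b) v

lemma c_d_apply (a : A) (n : ℤ) (b : A) (v : V) : ρ.c a (ρ.d n b v) = ρ.d n b (ρ.c a v) :=
  LinearMap.congr_fun (ρ.commute_c_d a n b) v

variable (ρ) in
/-- The weight space of weight `μ`: the `μ`-eigenspace of `d₀ ⊗ 1`. -/
def wt (μ : k) : Submodule k V := End.eigenspace (ρ.d 0 1) μ

lemma mem_wt {μ : k} {v : V} : v ∈ ρ.wt μ ↔ ρ.d 0 1 v = μ • v := End.mem_eigenspace_iff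

lemma d_mem_wt {μ ν : k} {n : ℤ} (hν : ν = μ + n) {v : V} (hv : v ∈ ρ.wt μ) (a : A) :
    ρ.d n a v ∈ ρ.wt ν := by
  rw [mem_wt] at hv ⊢
  simp [d_d_apply 0 n 1 a v, hv, hν, add_smul]

lemma c_mem_wt {μ : k} {v : V} (hv : v ∈ ρ.wt μ) (a : A) : ρ.c a v ∈ ρ.wt μ := by
  rw [mem_wt] at hv ⊢
  rw [← c_d_apply, hv, map_smul]

variable (ρ) in
/-- Irreducibility of a representation of `Vir ⊗ A`. Invariance under the operators `dₙ ⊗ a` is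
enough, as the central elements `C ⊗ a` are brackets of these up to a multiple of `d₀ ⊗ a`. -/
def Irreducible : Prop :=
  ∀ W : Submodule k V, (∀ n a, ∀ w ∈ W, ρ.d n a w ∈ W) → W = ⊥ ∨ W = ⊤

lemma Irreducible.eq_top (hρ : ρ.Irreducible) {W : Submodule k V}
    (hW : ∀ n a, ∀ w ∈ W, ρ.d n a w ∈ W) {w : V} (hw : w ∈ W) (hw0 : w ≠ 0) : W = ⊤ := by
  refine (hρ W hW).resolve_left ?_
  rintro rfl
  exact hw0 hw

variable (ρ) in
/-- The largest ideal `I` of `A` such that `dⱼ ⊗ I` kills `U`. -/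
def ann (U : Submodule k V) (j : ℤ) : Ideal A where
  carrier := {a | ∀ b, ∀ u ∈ U, ρ.d j (a * b) u = 0}
  add_mem' hx hy b u hu := by
    rw [add_mul, map_add, LinearMap.add_apply, hx b u hu, hy b u hu, add_zero]
  zero_mem' b u _ := by rw [zero_mul, map_zero, LinearMap.zero_apply]
  smul_mem' r x hx b u hu := by rw [smul_eq_mul, mul_comm r x, mul_assoc]; exact hx _ u hu

lemma d_eq_zero_of_mem_ann {U : Submodule k V} {j : ℤ} {a : A} (ha : a ∈ ρ.ann U j) {u : V}
    (hu : u ∈ U) : ρ.d j a u = 0 :=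
  mul_one a ▸ ha 1 u hu

variable (ρ) in
/-- The elements `a` of `A` such that `dₘ ⊗ a` kills `v` for all large `m`. -/
def ev (v : V) : Submodule k A where
  carrier := {a | ∀ᶠ m : ℤ in atTop, ρ.d m a v = 0}
  add_mem' ha hb := by
    filter_upwards [ha, hb] with m ha hb
    rw [map_add, LinearMap.add_apply, ha, hb, add_zero]
  zero_mem' := Eventually.of_forall fun m ↦ by rw [map_zero, LinearMap.zero_apply]
  smul_mem' t a ha := by
    filter_upwards [ha] with m ha
    rw [map_smul, LinearMap.smul_apply, ha, smul_zero]

lemma mem_ev {v : V} {a : A} : a ∈ ρ.ev v ↔ ∀ᶠ m : ℤ in atTop, ρ.d m a v = 0 := Iff.rfl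

variable (ρ) in
/-- The elements `a` of `A` such that `d₁ ⊗ a` kills `v`. -/
def kerOne (v : V) : Submodule k A := LinearMap.ker ((ρ.d 1).flip v)

lemma cofg_kerOne [∀ ν, FiniteDimensional k (ρ.wt ν)] {μ : k} {v : V} (hv : v ∈ ρ.wt μ) :
    (ρ.kerOne v).CoFG := by
  have mem_wt (a : A) : (ρ.d 1).flip v a ∈ ρ.wt (μ + 1) := d_mem_wt (by simp) hv a
  rw [kerOne, ← LinearMap.ker_codRestrict _ _ mem_wt]
  exact Submodule.CoFG.ker _

variable (ρ) in
/-- The vectors killed by all `dₘ ⊗ a` with `m ≥ N`. -/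
def killed (N : ℤ) : Submodule k V := ⨅ m ≥ N, ⨅ a, LinearMap.ker (ρ.d m a)

lemma mem_killed {N : ℤ} {v : V} : v ∈ ρ.killed N ↔ ∀ m ≥ N, ∀ a, ρ.d m a v = 0 := by
  simp [killed]

lemma killed_mono : Monotone ρ.killed := fun _ _ h _ hv ↦
  mem_killed.mpr fun m hm ↦ mem_killed.mp hv m (h.trans hm)

lemma d_d_eq_zero {w : V} {m n : ℤ} (hmn : m + n ≠ 0) {a b : A} (ha : ρ.d m a w = 0)
    (hab : ρ.d (m + n) (a * b) w = 0) : ρ.d m a (ρ.d n b w) = 0 := by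
  rw [d_d_apply, if_neg (by omega), ha, hab, map_zero, smul_zero, zero_smul, add_zero, add_zero]

lemma d_mem_killed {N M n : ℤ} {w : V} (hw : w ∈ ρ.killed N) (b : A) (hNM : N ≤ M)
    (hn : N ≤ M + n) (hpos : 0 < M + n) : ρ.d n b w ∈ ρ.killed M := by
  rw [mem_killed] at hw ⊢
  exact fun m hm a ↦ d_d_eq_zero (by omega) (hw m (by omega) a) (hw (m + n) (by omega) _)

lemma Irreducible.le_ev (hρ : ρ.Irreducible) {I : Ideal A} {v : V} (hv0 : v ≠ 0)
    (hv : I.restrictScalars k ≤ ρ.ev v) (w : V) : I.restrictScalars k ≤ ρ.ev w := by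
  let evVectors : Submodule k V :=
    { carrier := {w | ∀ a ∈ I, a ∈ ρ.ev w}
      add_mem' := fun hx hy a ha ↦ by
        filter_upwards [hx a ha, hy a ha] with m hx hy
        rw [map_add, hx, hy, add_zero]
      zero_mem' := fun a _ ↦ Eventually.of_forall fun m ↦ map_zero _
      smul_mem' := fun t x hx a ha ↦ by
        filter_upwards [hx a ha] with m hx
        rw [map_smul, hx, smul_zero] }
  have eq_top : evVectors = ⊤ := by
    refine hρ.eq_top (fun n b w hw a ha ↦ ?_) hv hv0
    filter_upwards [hw a ha, (tendsto_atTop_add_const_right atTop n tendsto_id).eventually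
      (hw (a * b) (I.mul_mem_right b ha)), eventually_ne_atTop (-n)] with m hma hmab hmn
    exact d_d_eq_zero (by omega) hma hmab
  exact (eq_top ▸ Submodule.mem_top : w ∈ evVectors)

lemma Irreducible.iSup_killed (hρ : ρ.Irreducible) {N : ℤ} {v : V} (hv0 : v ≠ 0)
    (hv : v ∈ ρ.killed N) : ⨆ M, ρ.killed M = ⊤ := by
  refine hρ.eq_top (fun n b w hw ↦ ?_) (Submodule.mem_iSup_of_mem N hv) hv0
  obtain ⟨M, hM⟩ := (Submodule.mem_iSup_of_directed _ killed_mono.directed_le).mp hw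
  exact Submodule.mem_iSup_of_mem (max (max M (M - n)) (1 - n))
    (d_mem_killed hM b (by omega) (by omega) (by omega))

lemma Irreducible.exists_le_killed (hρ : ρ.Irreducible) {N : ℤ} {v : V} (hv0 : v ≠ 0)
    (hv : v ∈ ρ.killed N) (U : Submodule k V) [FiniteDimensional k U] :
    ∃ M ≥ N, U ≤ ρ.killed M := by
  have isCompact : IsCompactElement U :=
    (Submodule.fg_iff_compact U).mp (Module.Finite.iff_fg.mp inferInstance)
  obtain ⟨_, ⟨M, rfl⟩, hM⟩ := isCompact _ _ (Set.range_nonempty _)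
    (directedOn_range.mpr killed_mono.directed_le) isLUB_iSup (hρ.iSup_killed hv0 hv ▸ le_top)
  exact ⟨max N M, le_max_left .., hM.trans (killed_mono (le_max_right ..))⟩

variable (ρ) in
/-- The smallest subspace containing `y` which is stable under all `dᵢ ⊗ a` with `i ≤ 0` and
all `C ⊗ a`. -/
def lowerSpan (y : V) : Submodule k V :=
  sInf {W | y ∈ W ∧ (∀ i ≤ 0, ∀ a, W ≤ W.comap (ρ.d i a)) ∧ ∀ a, W ≤ W.comap (ρ.c a)}

lemma lowerSpan_le {y : V} {W : Submodule k V} (hy : y ∈ W)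
    (hd : ∀ i ≤ 0, ∀ a, W ≤ W.comap (ρ.d i a)) (hc : ∀ a, W ≤ W.comap (ρ.c a)) :
    ρ.lowerSpan y ≤ W :=
  sInf_le ⟨hy, hd, hc⟩

lemma mem_lowerSpan (y : V) : y ∈ ρ.lowerSpan y :=
  Submodule.mem_sInf.mpr fun _ hW ↦ hW.1

lemma d_mem_lowerSpan_of_nonpos {y w : V} (hw : w ∈ ρ.lowerSpan y) {i : ℤ} (hi : i ≤ 0) (a : A) :
    ρ.d i a w ∈ ρ.lowerSpan y :=
  Submodule.mem_sInf.mpr fun W hW ↦ hW.2.1 i hi a (Submodule.mem_sInf.mp hw W hW)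

lemma c_mem_lowerSpan {y w : V} (hw : w ∈ ρ.lowerSpan y) (a : A) : ρ.c a w ∈ ρ.lowerSpan y :=
  Submodule.mem_sInf.mpr fun W hW ↦ hW.2.2 a (Submodule.mem_sInf.mp hw W hW)

lemma d_mem_lowerSpan {y w : V} (hy : y ∈ ρ.killed 1) (hw : w ∈ ρ.lowerSpan y) (i : ℤ) (a : A) :
    ρ.d i a w ∈ ρ.lowerSpan y := by
  set Y := ρ.lowerSpan y
  let Z : Submodule k V := Y ⊓ ⨅ j > 0, ⨅ b, Y.comap (ρ.d j b)
  have mem_Z {z : V} : z ∈ Z ↔ z ∈ Y ∧ ∀ j > 0, ∀ b, ρ.d j b z ∈ Y := by simp [Z]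
  have Y_le_Z : Y ≤ Z := by
    refine lowerSpan_le (mem_Z.mpr ⟨mem_lowerSpan y, fun j hj b ↦ ?_⟩)
      (fun i hi a w hw ↦ ?_) (fun a w hw ↦ ?_)
    · rw [mem_killed.mp hy j hj b]; exact Y.zero_mem
    · rw [mem_Z] at hw
      refine mem_Z.mpr ⟨d_mem_lowerSpan_of_nonpos hw.1 hi a, fun j hj b ↦ ?_⟩
      rw [d_d_apply]
      refine Y.add_mem (Y.add_mem (d_mem_lowerSpan_of_nonpos (hw.2 j hj b) hi a)
        (Y.smul_mem _ ?_)) (Y.smul_mem _ (c_mem_lowerSpan hw.1 _))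
      rcases lt_or_ge 0 (j + i) with h | h
      · exact hw.2 _ h _
      · exact d_mem_lowerSpan_of_nonpos hw.1 h _
    · rw [mem_Z] at hw
      refine mem_Z.mpr ⟨c_mem_lowerSpan hw.1 a, fun j hj b ↦ ?_⟩
      rw [← c_d_apply]
      exact c_mem_lowerSpan (hw.2 j hj b) a
  rcases lt_or_ge 0 i with h | h
  · exact (mem_Z.mp (Y_le_Z hw)).2 i h a
  · exact d_mem_lowerSpan_of_nonpos hw h a

lemma lowerSpan_le_iSup_wt {μ : k} {y : V} (hy : y ∈ ρ.wt μ) :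
    ρ.lowerSpan y ≤ ⨆ n : ℕ, ρ.wt (μ - n) := by
  refine lowerSpan_le (Submodule.mem_iSup_of_mem 0 (by simpa using hy))
    (fun i hi a ↦ iSup_le fun n w hw ↦ Submodule.mem_iSup_of_mem (n + i.natAbs) ?_)
    (fun a ↦ iSup_le fun n w hw ↦ Submodule.mem_iSup_of_mem n (c_mem_wt hw a))
  have cast_natAbs : (i.natAbs : k) = -i := by
    rw [← Int.cast_natCast, Int.ofNat_natAbs_of_nonpos hi, Int.cast_neg]
  exact d_mem_wt (by push_cast; rw [cast_natAbs]; ring) hw a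

variable (ρ) in
/-- The representation twisted by the automorphism `dₙ ↦ -d₋ₙ`, `C ↦ -C`. -/
def op : VirRep k A V where
  d n := -ρ.d (-n)
  c := -ρ.c
  lie_d_d n m a b := by
    have central_term : (if -m = - -n then (((-n : ℤ) : k) ^ 3 - (-n : ℤ)) / 12 else 0) =
        -(if m = -n then ((n : k) ^ 3 - n) / 12 else 0) := by
      by_cases hm : m = -n
      · rw [if_pos hm, if_pos (by omega)]; push_cast; ring
      · rw [if_neg hm, if_neg (by omega), neg_zero]
    ext v
    have := d_d_apply (ρ := ρ) (-n) (-m) a b v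
    rw [central_term, ← neg_add] at this
    simp only [Ring.lie_def, LinearMap.sub_apply, Module.End.mul_apply, LinearMap.neg_apply,
      LinearMap.add_apply, LinearMap.smul_apply, map_neg, neg_neg, this]
    push_cast
    module
  commute_c_d a n b := (ρ.commute_c_d a (-n) b).neg_left.neg_right

lemma wt_op (μ : k) : ρ.op.wt μ = ρ.wt (-μ) := by
  ext v
  simp [mem_wt, op, neg_eq_iff_eq_neg]

lemma Irreducible.op (hρ : ρ.Irreducible) : ρ.op.Irreducible := by
  intro W hW
  refine hρ W fun n a w hw ↦ ?_
  simpa [VirRep.op] using hW (-n) a w hw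

lemma exists_d_eq_zero_of_not_bddAbove [∀ ν, FiniteDimensional k (ρ.wt ν)] {μ : k}
    (hμ : ¬ BddAbove (Set.range fun n : ℕ ↦ finrank k (ρ.wt (μ - n)))) (T : Submodule k A)
    [FiniteDimensional k T] :
    ∃ n : ℕ, 0 < n ∧ ∃ v ∈ ρ.wt (μ - n), v ≠ 0 ∧
      ∀ t ∈ T, ρ.d n t v = 0 ∧ ρ.d (n + 1) t v = 0 := by
  let W : Submodule k (V × V) := (ρ.wt μ).prod (ρ.wt (μ + 1))
  have : FiniteDimensional k W :=
    Module.Finite.iff_fg.mpr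
      ((Module.Finite.iff_fg.mp inferInstance).prod (Module.Finite.iff_fg.mp inferInstance))
  obtain ⟨_, ⟨n, rfl⟩, hn⟩ := not_bddAbove_iff.mp hμ
    (finrank k T * finrank k W + finrank k (ρ.wt μ))
  dsimp only at hn
  let Φ : ρ.wt (μ - n) →ₗ[k] T →ₗ[k] V × V :=
    LinearMap.mk₂ k (fun v t ↦ (ρ.d n t v, ρ.d (n + 1) t v))
      (fun _ _ _ ↦ by simp) (fun _ _ _ ↦ by simp) (fun _ _ _ ↦ by simp) (fun _ _ _ ↦ by simp)
  have mem_W (v t) : Φ v t ∈ W :=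
    ⟨d_mem_wt (by simp) v.2 _, d_mem_wt (by push_cast; ring) v.2 _⟩
  have finrank_le := (cofg_ker_and_finrank_le Φ W mem_W).2
  have ker_ne_bot : LinearMap.ker Φ ≠ ⊥ := fun h ↦ by
    have := (LinearMap.ker Φ).finrank_quotient_add_finrank
    rw [h, finrank_bot] at this
    rw [h] at finrank_le
    omega
  obtain ⟨v, hv, hv0⟩ := (Submodule.ne_bot_iff _).mp ker_ne_bot
  refine ⟨n, Nat.pos_of_ne_zero ?_, v, v.2, by simpa using hv0, fun t ht ↦ ?_⟩
  · rintro rfl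
    rw [Nat.cast_zero, sub_zero] at hn
    omega
  · exact Prod.mk.inj (LinearMap.congr_fun hv ⟨t, ht⟩)

end Field

section CharZero

variable {k A V : Type*} [Field k] [CharZero k] [CommRing A] [Algebra k A] [AddCommGroup V]
  [Module k V] {ρ : VirRep k A V}

lemma d_add_eq_zero {n m : ℤ} (hnm : n ≠ m) (h : n + m ≠ 0 ∨ n.natAbs = 1) {a b : A} {v : V}
    (hab : ρ.d n a (ρ.d m b v) = 0) (hba : ρ.d m b (ρ.d n a v) = 0) :
    ρ.d (n + m) (a * b) v = 0 := by
  have central_term : (if m = -n then ((n : k) ^ 3 - n) / 12 else 0) = 0 := by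
    split_ifs with hm
    · obtain rfl | rfl : n = 1 ∨ n = -1 := by omega
      all_goals norm_num
    · rfl
  have hmn : (m : k) - n ≠ 0 := sub_ne_zero.mpr (Int.cast_injective.ne hnm.symm)
  have := d_d_apply (ρ := ρ) n m a b v
  rw [hab, hba, central_term, zero_smul, add_zero, zero_add] at this
  exact (smul_eq_zero.mp this.symm).resolve_left hmn

lemma d_add_eq_zero_of_eq_zero {n m : ℤ} (hnm : n ≠ m) (h : n + m ≠ 0 ∨ n.natAbs = 1) {a b : A}
    {v : V} (ha : ρ.d n a v = 0) (hb : ρ.d m b v = 0) : ρ.d (n + m) (a * b) v = 0 :=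
  d_add_eq_zero hnm h (by rw [hb, map_zero]) (by rw [ha, map_zero])

lemma mem_ann {U : Submodule k V} (hU : ∀ a, ∀ u ∈ U, ρ.d 0 a u ∈ U) {j : ℤ} (hj : j ≠ 0) {a : A}
    (h : ∀ u ∈ U, ρ.d j a u = 0) : a ∈ ρ.ann U j := by
  intro b u hu
  rw [mul_comm, ← zero_add j]
  exact d_add_eq_zero hj.symm (by omega) (by rw [h u hu, map_zero]) (h _ (hU b u hu))

lemma finite_quotient_ann {U W : Submodule k V} [FiniteDimensional k U] [FiniteDimensional k W]
    (hU : ∀ a, ∀ u ∈ U, ρ.d 0 a u ∈ U) {j : ℤ} (hj : j ≠ 0) (hW : ∀ a, ∀ u ∈ U, ρ.d j a u ∈ W) :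
    Module.Finite k (A ⧸ ρ.ann U j) ∧
      finrank k (A ⧸ ρ.ann U j) ≤ finrank k U * finrank k W := by
  let Φ : A →ₗ[k] U →ₗ[k] V := LinearMap.lcomp k V U.subtype ∘ₗ ρ.d j
  have ker_eq : LinearMap.ker Φ = (ρ.ann U j).restrictScalars k := by
    ext a
    exact ⟨fun h ↦ mem_ann hU hj fun u hu ↦ LinearMap.congr_fun h ⟨u, hu⟩,
      fun h ↦ LinearMap.ext fun u ↦ d_eq_zero_of_mem_ann h u.2⟩
  have := cofg_ker_and_finrank_le Φ W fun a u ↦ hW a u u.2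
  rwa [ker_eq] at this

lemma ann_mul_le {U : Submodule k V} {n m : ℤ} (hnm : n ≠ m) (h : n + m ≠ 0 ∨ n.natAbs = 1) :
    ρ.ann U n * ρ.ann U m ≤ ρ.ann U (n + m) := by
  rw [Ideal.mul_le]
  intro a ha b hb r u hu
  rw [mul_assoc]
  exact d_add_eq_zero_of_eq_zero hnm h (d_eq_zero_of_mem_ann ha hu) (hb r u hu)

lemma ann_pow_mul_le {U : Submodule k V} {n : ℤ} (hn : n ≠ 0) (s : ℕ) :
    ρ.ann U n ^ s * ρ.ann U (2 * n) ≤ ρ.ann U ((s + 2) * n) := by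
  induction s with
  | zero => simp
  | succ s ih =>
    have index_ne {t : ℤ} (ht : t ≠ 0) : n * t ≠ 0 := mul_ne_zero hn ht
    calc ρ.ann U n ^ (s + 1) * ρ.ann U (2 * n)
        = ρ.ann U n * (ρ.ann U n ^ s * ρ.ann U (2 * n)) := by rw [pow_succ', mul_assoc]
      _ ≤ ρ.ann U n * ρ.ann U ((s + 2) * n) := Ideal.mul_mono_right ih
      _ ≤ ρ.ann U (n + (s + 2) * n) :=
        ann_mul_le (fun h ↦ index_ne (t := s + 1) (by omega) (by linear_combination -h))
          (.inl fun h ↦ index_ne (t := s + 3) (by omega) (by linear_combination h))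
      _ = ρ.ann U (((s + 1 : ℕ) + 2) * n) := by congr 1; push_cast; ring

theorem exists_ideal_of_bounded [IsNoetherianRing A] {U : Submodule k V} [FiniteDimensional k U]
    {W : ℤ → Submodule k V} [∀ j, FiniteDimensional k (W j)]
    (hU : ∀ a, ∀ u ∈ U, ρ.d 0 a u ∈ U) (hW : ∀ j a, ∀ u ∈ U, ρ.d j a u ∈ W j) {B : ℕ}
    (hB : ∀ j, finrank k (W j) ≤ B) :
    ∃ I : Ideal A, Module.Finite k (A ⧸ I) ∧ ∀ j, I ≤ ρ.ann U j := by
  set D := finrank k U * B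
  have finite_ann {j : ℤ} (hj : j ≠ 0) :
      Module.Finite k (A ⧸ ρ.ann U j) ∧ finrank k (A ⧸ ρ.ann U j) ≤ D :=
    (finite_quotient_ann hU hj (hW j)).imp_right (·.trans (Nat.mul_le_mul_left _ (hB j)))
  let K (ε : ℤ) : Ideal A := ρ.ann U ε ^ D * ρ.ann U (2 * ε)
  have finite_K {ε : ℤ} (hε : ε ≠ 0) : Module.Finite k (A ⧸ K ε) :=
    finite_quotient_mul (IsNoetherian.noetherian _)
      (finite_quotient_pow (IsNoetherian.noetherian _) (finite_ann hε).1 D)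
      (finite_ann (mul_ne_zero two_ne_zero hε)).1
  have K_le {ε : ℤ} (hε : ε ≠ 0) (s : ℕ) : K ε ≤ ρ.ann U ((s + 2) * ε) := by
    obtain ⟨_, finrank_le⟩ := finite_ann (j := (s + 2) * ε) (mul_ne_zero (by omega) hε)
    exact pow_mul_le_of_finrank_le finrank_le (ann_pow_mul_le hε s)
  refine ⟨K 1 ⊓ K (-1) ⊓ ρ.ann U 1 * ρ.ann U (-1),
    finite_quotient_inf (finite_quotient_inf (finite_K one_ne_zero) (finite_K (by decide)))
      (finite_quotient_mul (IsNoetherian.noetherian _) (finite_ann one_ne_zero).1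
        (finite_ann (by decide)).1), fun j ↦ ?_⟩
  obtain h | rfl | rfl | rfl | h : j ≤ -2 ∨ j = -1 ∨ j = 0 ∨ j = 1 ∨ 2 ≤ j := by omega
  · obtain ⟨s, rfl⟩ : ∃ s : ℕ, j = (s + 2) * -1 := ⟨(-2 - j).toNat, by omega⟩
    exact (inf_le_left.trans inf_le_right).trans (K_le (by decide) s)
  · exact inf_le_right.trans Ideal.mul_le_right
  · exact inf_le_right.trans (ann_mul_le (by decide) (.inr rfl))
  · exact inf_le_right.trans Ideal.mul_le_left
  · obtain ⟨s, rfl⟩ : ∃ s : ℕ, j = (s + 2) * 1 := ⟨(j - 2).toNat, by omega⟩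
    exact (inf_le_left.trans inf_le_left).trans (K_le one_ne_zero s)

lemma eventually_forall_d_mul_eq_zero {v : V} {a : A} (ha : a ∈ ρ.ev v) (n : ℤ) :
    ∀ᶠ m : ℤ in atTop, ∀ b, ρ.d n b v = 0 → ρ.d m (a * b) v = 0 := by
  filter_upwards [(tendsto_atTop_add_const_right atTop (-n) tendsto_id).eventually
    (mem_ev.mp ha), eventually_ne_atTop (2 * n), eventually_ne_atTop 0] with m ham hmn hm0 b hb
  have := d_add_eq_zero_of_eq_zero (by simp only [id]; omega) (by simp only [id]; omega) ham hb
  rwa [id, neg_add_cancel_right] at this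

lemma mul_mem_ev {v : V} {a b : A} (ha : a ∈ ρ.ev v) {n : ℤ} (hb : ρ.d n b v = 0) :
    a * b ∈ ρ.ev v :=
  (eventually_forall_d_mul_eq_zero ha n).mono fun _ h ↦ h b hb

lemma exists_ideal_le_ev [∀ ν, FiniteDimensional k (ρ.wt ν)] {μ : k} {v : V} (hv : v ∈ ρ.wt μ)
    (h1 : 1 ∈ ρ.ev v) :
    ∃ I : Ideal A, Module.Finite k (A ⧸ I) ∧ I.restrictScalars k ≤ ρ.ev v := by
  let B : Subalgebra k A := (ρ.ev v).toSubalgebra h1 fun a b ha hb ↦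
    let ⟨_, hm⟩ := (mem_ev.mp hb).exists
    mul_mem_ev ha hm
  have kerOne_le : ρ.kerOne v ≤ ρ.ev v := fun a ha ↦ one_mul a ▸ mul_mem_ev h1 (n := 1) ha
  exact ⟨conductorIdeal B, finite_quotient_conductorIdeal ((cofg_kerOne hv).of_le kerOne_le),
    fun _ ↦ mem_of_mem_conductorIdeal B⟩

lemma exists_mem_killed_of_ev_eq_top [∀ ν, FiniteDimensional k (ρ.wt ν)] {μ : k} {v : V}
    (hv : v ∈ ρ.wt μ) (hev : ρ.ev v = ⊤) : ∃ N, v ∈ ρ.killed N := by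
  have mem (a : A) : a ∈ ρ.ev v := hev ▸ Submodule.mem_top
  obtain ⟨_, ⟨s, rfl⟩, hs⟩ := exists_fg_codisjoint_of_cofg (cofg_kerOne hv)
  obtain ⟨N, hN⟩ := eventually_atTop.mp ((eventually_forall_d_mul_eq_zero (mem 1) 1).and
    ((eventually_all_finset s).mpr fun a _ ↦ mem a))
  refine ⟨N, mem_killed.mpr fun m hm a ↦ ?_⟩
  have ker_eq_top : LinearMap.ker ((ρ.d m).flip v) = ⊤ := by
    refine top_le_iff.mp (hs.eq_top ▸ sup_le (Submodule.span_le.mpr (hN m hm).2) fun b hb ↦ ?_)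
    exact one_mul b ▸ (hN m hm).1 b hb
  exact (ker_eq_top ▸ Submodule.mem_top : a ∈ LinearMap.ker ((ρ.d m).flip v))

lemma one_mem_ev {n : ℕ} (hn : 0 < n) {v : V} (h0 : ρ.d n 1 v = 0) (h1 : ρ.d (n + 1) 1 v = 0) :
    1 ∈ ρ.ev v := by
  refine mem_ev.mpr (eventually_atTop.mpr ⟨(n * (n + 1) + 1 : ℕ), fun m hm ↦ ?_⟩)
  lift m to ℕ using by omega
  refine of_add_of_consecutive (P := fun i : ℕ ↦ ρ.d i 1 v = 0) (fun i j hij hi hj ↦ ?_) hn h0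
    (by exact_mod_cast h1) (by exact_mod_cast hm)
  have := d_add_eq_zero_of_eq_zero (by exact_mod_cast hij) (by omega) hi hj
  rwa [one_mul] at this

/-- The dimension count is used twice: a vector killed by `dₘ ⊗ 1` for large `m` produces a cofinite
ideal `I` of elements that lie in `ev` of every vector, and then a vector killed by `dₘ ⊗ T`, with
`T` a finite-dimensional complement of `I`, has `ev` equal to `A`. -/
lemma Irreducible.exists_mem_killed_of_not_bddAbove [∀ ν, FiniteDimensional k (ρ.wt ν)]
    (hρ : ρ.Irreducible) {μ : k}
    (hμ : ¬ BddAbove (Set.range fun n : ℕ ↦ finrank k (ρ.wt (μ - n)))) :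
    ∃ n : ℕ, ∃ v ∈ ρ.wt (μ - n), v ≠ 0 ∧ ∃ N, v ∈ ρ.killed N := by
  obtain ⟨n, hn, v, hv, hv0, hd⟩ := exists_d_eq_zero_of_not_bddAbove hμ (Submodule.span k {1})
  obtain ⟨hd0, hd1⟩ := hd 1 (Submodule.mem_span_singleton_self 1)
  obtain ⟨I, hI, hIv⟩ := exists_ideal_le_ev hv (one_mem_ev hn hd0 hd1)
  obtain ⟨T, hT, hTI⟩ := exists_fg_codisjoint_of_cofg (cofg_restrictScalars_iff.mpr hI)
  have : FiniteDimensional k T := Module.Finite.iff_fg.mpr hT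
  obtain ⟨m, hm, u, hu, hu0, hd⟩ :=
    exists_d_eq_zero_of_not_bddAbove hμ (T ⊔ Submodule.span k {1})
  have one_mem : 1 ∈ ρ.ev u := by
    obtain ⟨hd0, hd1⟩ := hd 1 (Submodule.mem_sup_right (Submodule.mem_span_singleton_self 1))
    exact one_mem_ev hm hd0 hd1
  have T_le : T ≤ ρ.ev u := fun t ht ↦
    one_mul t ▸ mul_mem_ev one_mem (hd t (Submodule.mem_sup_left ht)).1
  have ev_eq_top : ρ.ev u = ⊤ :=
    top_le_iff.mp (hTI.eq_top ▸ sup_le T_le (hρ.le_ev hv0 hIv u))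
  exact ⟨m, u, hu, hu0, exists_mem_killed_of_ev_eq_top hu ev_eq_top⟩

lemma Irreducible.eq_zero_of_singular (hρ : ρ.Irreducible) {ν : k} (hν : ρ.wt ν ≠ ⊥) {n : ℕ}
    (hn : 0 < n) {y : V} (hy : y ∈ ρ.wt (ν - n)) (hy1 : y ∈ ρ.killed 1) : y = 0 := by
  by_contra hy0
  have eq_top : ρ.lowerSpan y = ⊤ :=
    hρ.eq_top (fun i a w hw ↦ d_mem_lowerSpan hy1 hw i a) (mem_lowerSpan y) hy0
  refine hν ((End.eigenspaces_iSupIndep (ρ.d 0 1) ν).eq_bot_of_le (le_top.trans ?_))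
  rw [← eq_top]
  refine (lowerSpan_le_iSup_wt hy).trans (iSup_le fun m ↦ le_iSup₂_of_le (ν - n - m) ?_ le_rfl)
  rw [sub_sub, Ne, sub_eq_self]
  exact_mod_cast (by omega : n + m ≠ 0)

lemma Irreducible.d_eq_zero_of_singular (hρ : ρ.Irreducible) {ν : k} {u : V} (hu : u ∈ ρ.wt ν)
    (hu1 : u ∈ ρ.killed 1) {I : Ideal A} (h1 : ∀ a ∈ I, ρ.d (-1) a u = 0)
    (h2 : ∀ a ∈ I, ρ.d (-2) a u = 0) (j : ℤ) {a : A} (ha : a ∈ I) : ρ.d j a u = 0 := by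
  rcases eq_or_ne u 0 with rfl | hu0
  · exact map_zero _
  rw [mem_killed] at hu1
  have d_zero (b : A) (hb : b ∈ I) : ρ.d 0 b u = 0 := by
    have := d_add_eq_zero_of_eq_zero (by decide) (.inr rfl) (hu1 1 le_rfl 1) (h1 b hb)
    rwa [one_mul] at this
  have c_zero (b : A) (hb : b ∈ I) : ρ.c b u = 0 := by
    have := d_d_apply (ρ := ρ) 2 (-2) 1 b u
    rw [h2 b hb, hu1 2 (by decide), one_mul, map_zero, map_zero, add_neg_cancel, d_zero b hb,
      smul_zero, add_zero, zero_add, if_pos rfl, eq_comm, smul_eq_zero] at this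
    exact this.resolve_left (by norm_num)
  have d_neg (n : ℕ) : ∀ b ∈ I, ρ.d (-n) b u = 0 := by
    induction n using Nat.strong_induction_on with
    | _ n ih =>
      intro b hb
      rcases Nat.eq_zero_or_pos n with rfl | hn
      · exact d_zero b hb
      refine hρ.eq_zero_of_singular ((Submodule.ne_bot_iff _).mpr ⟨u, hu, hu0⟩) hn
        (d_mem_wt (by push_cast; ring) hu b) (mem_killed.mpr fun m hm r ↦ ?_)
      have hrb : r * b ∈ I := I.mul_mem_left r hb
      have d_add : ρ.d (m + -n) (r * b) u = 0 := by
        rcases lt_or_ge 0 (m + -n : ℤ) with h | h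
        · exact hu1 _ h _
        · obtain ⟨i, hi⟩ := Int.eq_ofNat_of_zero_le (neg_nonneg.mpr h)
          exact neg_eq_iff_eq_neg.mp hi ▸ ih i (by omega) _ hrb
      rw [d_d_apply, hu1 m hm, d_add, c_zero _ hrb, map_zero, smul_zero, smul_zero, add_zero,
        add_zero]
  rcases lt_or_ge 0 j with h | h
  · exact hu1 j h a
  · obtain ⟨i, hi⟩ := Int.eq_ofNat_of_zero_le (neg_nonneg.mpr h)
    exact neg_eq_iff_eq_neg.mp hi ▸ d_neg i a ha

lemma Irreducible.exists_ideal_of_singular [∀ ν, FiniteDimensional k (ρ.wt ν)]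
    (hρ : ρ.Irreducible) {ν : k} {u : V} (hu : u ∈ ρ.wt ν)
    (hu1 : u ∈ ρ.killed 1) :
    ∃ I : Ideal A, Module.Finite k (A ⧸ I) ∧ ∀ a ∈ I, ∀ j, ρ.d j a u = 0 := by
  let X : Submodule k V := ρ.wt ν ⊓ ρ.killed 1
  have mem_X : u ∈ X := ⟨hu, hu1⟩
  have d_zero_mem (a : A) (x : V) (hx : x ∈ X) : ρ.d 0 a x ∈ X :=
    ⟨d_mem_wt (by simp) hx.1 a, d_mem_killed hx.2 a le_rfl (by simp) (by simp)⟩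
  have finite_ann {j : ℤ} (hj : j ≠ 0) : Module.Finite k (A ⧸ ρ.ann X j) :=
    (finite_quotient_ann d_zero_mem hj fun a x hx ↦ d_mem_wt rfl hx.1 a).1
  exact ⟨ρ.ann X (-1) ⊓ ρ.ann X (-2),
    finite_quotient_inf (finite_ann (by decide)) (finite_ann (by decide)), fun a ha j ↦
      hρ.d_eq_zero_of_singular (I := ρ.ann X (-1) ⊓ ρ.ann X (-2)) hu hu1
        (fun b hb ↦ d_eq_zero_of_mem_ann hb.1 mem_X)
        (fun b hb ↦ d_eq_zero_of_mem_ann hb.2 mem_X) j ha⟩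

lemma d_eq_zero_of_forall_ge_neg_two {w : V} (hw : ∀ i ≥ -2, i ≠ 0 → ∀ a, ρ.d i a w = 0) (j : ℤ)
    (a : A) : ρ.d j a w = 0 := by
  have d_neg_one : ρ.d (-1) 1 w = 0 := hw (-1) (by decide) (by decide) 1
  have d_below (n : ℕ) (b : A) : ρ.d (-2 - n) b w = 0 := by
    induction n with
    | zero => exact hw _ (by simp) (by simp) b
    | succ n ih =>
      have := d_add_eq_zero_of_eq_zero (by omega) (.inr rfl) d_neg_one ih
      rwa [one_mul, show -1 + (-2 - (n : ℤ)) = -2 - (n + 1 : ℕ) by push_cast; ring] at this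
  rcases lt_or_ge j (-2) with h | h
  · obtain ⟨n, hn⟩ := Int.eq_ofNat_of_zero_le (by omega : 0 ≤ -2 - j)
    obtain rfl : j = -2 - n := by omega
    exact d_below n a
  · rcases eq_or_ne j 0 with rfl | hj
    · have := d_add_eq_zero_of_eq_zero (by decide) (.inr rfl) d_neg_one
        (hw 1 (by decide) (by decide) a)
      rwa [one_mul] at this
    · exact hw j h hj a

lemma d_eq_zero_of_mem_wt_add {μ : k} {N : ℤ} (hN : ρ.wt μ ≤ ρ.killed N) {m : ℤ} (hm : N + 2 ≤ m)
    (hm3 : 3 ≤ m) {w : V} (hw : w ∈ ρ.wt (μ + m)) (hwN : w ∈ ρ.killed N) (j : ℤ) (a : A) :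
    ρ.d j a w = 0 := by
  refine d_eq_zero_of_forall_ge_neg_two (fun i hi hi0 b ↦ ?_) j a
  have d_neg_mem : ρ.d (-m) 1 w ∈ ρ.wt μ := d_mem_wt (by simp) hw 1
  have := d_add_eq_zero (n := i + m) (m := -m) (a := b) (b := 1) (by omega) (.inl (by omega))
    (mem_killed.mp (hN d_neg_mem) _ (by omega) b)
    (by rw [mem_killed.mp hwN _ (by omega), map_zero])
  rwa [add_neg_cancel_right, mul_one] at this

lemma Irreducible.exists_ideal_of_not_bddAbove [∀ ν, FiniteDimensional k (ρ.wt ν)]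
    (hρ : ρ.Irreducible) {μ : k}
    (hμ : ¬ BddAbove (Set.range fun n : ℕ ↦ finrank k (ρ.wt (μ - n)))) :
    ∃ v ≠ 0, ∃ I : Ideal A, Module.Finite k (A ⧸ I) ∧ ∀ a ∈ I, ∀ j, ρ.d j a v = 0 := by
  obtain ⟨n, v, hv, hv0, N', hvN'⟩ := hρ.exists_mem_killed_of_not_bddAbove hμ
  obtain ⟨N, hN, wt_le⟩ :=
    hρ.exists_le_killed hv0 (killed_mono (le_max_left N' 1) hvN') (ρ.wt μ)
  have one_le : 1 ≤ N := (le_max_right ..).trans hN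
  let P (m : ℤ) : Prop := ∃ w ∈ ρ.wt (μ + m), w ≠ 0 ∧ w ∈ ρ.killed N
  have exists_P : ∃ m, P m :=
    ⟨-n, v, by simpa [← sub_eq_add_neg] using hv, hv0,
      killed_mono ((le_max_left ..).trans hN) hvN'⟩
  by_cases hbdd : ∃ b : ℤ, ∀ m, P m → m ≤ b
  · obtain ⟨m, ⟨w, hw, hw0, hwN⟩, hmax⟩ := Int.exists_greatest_of_bdd hbdd exists_P
    refine ⟨w, hw0, hρ.exists_ideal_of_singular hw (mem_killed.mpr fun i hi a ↦ ?_)⟩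
    by_contra hne
    have : P (m + i) := ⟨ρ.d i a w, d_mem_wt (by push_cast; ring) hw a, hne,
      d_mem_killed hwN a le_rfl (by omega) (by omega)⟩
    exact absurd (hmax _ this) (by omega)
  · push Not at hbdd
    obtain ⟨m, ⟨w, hw, hw0, hwN⟩, hm⟩ := hbdd (N + 2)
    exact ⟨w, hw0, ⊤, inferInstance,
      fun a _ j ↦ d_eq_zero_of_mem_wt_add wt_le hm.le (by omega) hw hwN j a⟩

theorem Irreducible.exists_ideal [IsNoetherianRing A] [∀ ν, FiniteDimensional k (ρ.wt ν)]
    (hρ : ρ.Irreducible) {μ : k} (hμ : ρ.wt μ ≠ ⊥) :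
    ∃ v ≠ 0, ∃ I : Ideal A, Module.Finite k (A ⧸ I) ∧ ∀ a ∈ I, ∀ j, ρ.d j a v = 0 := by
  by_cases below : BddAbove (Set.range fun n : ℕ ↦ finrank k (ρ.wt (μ - n)))
  swap
  · exact hρ.exists_ideal_of_not_bddAbove below
  by_cases above : BddAbove (Set.range fun n : ℕ ↦ finrank k (ρ.wt (μ + n)))
  swap
  · have (ν : k) : FiniteDimensional k (ρ.op.wt ν) := by rw [wt_op]; infer_instance
    have finrank_op (n : ℕ) : finrank k (ρ.op.wt (-μ - n)) = finrank k (ρ.wt (μ + n)) := by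
      rw [wt_op, neg_sub, sub_neg_eq_add, add_comm]
    obtain ⟨v, hv0, I, hI, hIv⟩ :=
      hρ.op.exists_ideal_of_not_bddAbove (μ := -μ) (by simpa only [finrank_op] using above)
    exact ⟨v, hv0, I, hI, fun a ha j ↦ by simpa [VirRep.op] using hIv a ha (-j)⟩
  obtain ⟨B, hB⟩ := below
  obtain ⟨B', hB'⟩ := above
  have finrank_le (j : ℤ) : finrank k (ρ.wt (μ + j)) ≤ max B B' := by
    obtain ⟨n, rfl | rfl⟩ := j.eq_nat_or_neg
    · exact le_max_of_le_right (by rw [Int.cast_natCast]; exact hB' ⟨n, rfl⟩)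
    · exact le_max_of_le_left
        (by rw [Int.cast_neg, Int.cast_natCast, ← sub_eq_add_neg]; exact hB ⟨n, rfl⟩)
  obtain ⟨I, hI, hIμ⟩ := exists_ideal_of_bounded (fun a u hu ↦ d_mem_wt (by simp) hu a)
    (fun j a u hu ↦ d_mem_wt rfl hu a) finrank_le
  obtain ⟨v, hv, hv0⟩ := (Submodule.ne_bot_iff _).mp hμ
  exact ⟨v, hv0, I, hI, fun a ha j ↦ d_eq_zero_of_mem_ann (hIμ j ha) hv⟩

end CharZero

end VirRep

section Sl2

open LieModule Module

variable {R L M : Type*} [CommRing R] [LieRing L] [LieAlgebra R L] [AddCommGroup M] [Module R M]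
  [LieRingModule L M] [LieModule R L M] {h e f : L} {c : R} {v : M}

lemma lie_h_toEnd_e_pow (t : IsSl2Triple h e f) (hv : ⁅h, v⁆ = c • v) (k : ℕ) :
    ⁅h, (toEnd R L M e ^ k) v⁆ = (c + 2 * k) • (toEnd R L M e ^ k) v := by
  induction k with
  | zero => simpa using hv
  | succ k ih =>
    rw [pow_succ', End.mul_apply, toEnd_apply_apply, leibniz_lie, ih, t.lie_h_e_smul R, smul_lie,
      lie_smul]
    push_cast
    module

lemma lie_h_toEnd_f_pow (t : IsSl2Triple h e f) (hv : ⁅h, v⁆ = c • v) (k : ℕ) :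
    ⁅h, (toEnd R L M f ^ k) v⁆ = (c - 2 * k) • (toEnd R L M f ^ k) v := by
  have hk := lie_h_toEnd_e_pow t.symm (show ⁅-h, v⁆ = -c • v by rw [neg_lie, hv, neg_smul]) k
  rw [neg_lie, neg_eq_iff_eq_neg] at hk
  rw [hk]
  module

lemma lie_e_toEnd_f_pow_succ (t : IsSl2Triple h e f) (hv : ⁅h, v⁆ = c • v) (k : ℕ) :
    ⁅e, (toEnd R L M f ^ (k + 1)) v⁆ =
      (toEnd R L M f ^ (k + 1)) ⁅e, v⁆ + ((k + 1) * (c - k)) • (toEnd R L M f ^ k) v := by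
  induction k with
  | zero => simp [leibniz_lie e, t.lie_e_f, hv, add_comm]
  | succ k ih =>
    rw [pow_succ' _ (k + 1), End.mul_apply, End.mul_apply, toEnd_apply_apply, toEnd_apply_apply,
      leibniz_lie, t.lie_e_f, ih, lie_h_toEnd_f_pow t hv, lie_add, lie_smul,
      ← toEnd_apply_apply R L M f ((toEnd R L M f ^ k) v), ← End.mul_apply, ← pow_succ']
    push_cast
    module

variable [IsDomain R] [CharZero R] [Module.IsTorsionFree R M]

lemma exists_nat_eq_of_hasPrimitiveVectorWith {t : IsSl2Triple h e f}
    (P : t.HasPrimitiveVectorWith v c) (hf : ∃ n, (toEnd R L M f ^ n) v = 0) :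
    ∃ n : ℕ, c = n ∧ (toEnd R L M f ^ n) v ≠ 0 := by
  obtain ⟨n, hn, hn'⟩ := Nat.exists_not_and_succ_of_not_zero_of_exists P.ne_zero hf
  have hcn := P.lie_e_pow_succ_toEnd_f n
  rw [hn', lie_zero, eq_comm, smul_eq_zero_iff_left hn, mul_eq_zero, sub_eq_zero] at hcn
  exact ⟨n, hcn.resolve_left (Nat.cast_add_one_ne_zero n), hn⟩

lemma exists_int_eq_of_lie_h_eq_smul (t : IsSl2Triple h e f)
    (he : ∃ n, (toEnd R L M e ^ n) v = 0) (hf : ∀ w : M, ∃ n, (toEnd R L M f ^ n) w = 0)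
    (hv0 : v ≠ 0) (hv : ⁅h, v⁆ = c • v) : ∃ z : ℤ, c = z := by
  obtain ⟨r, hr, hr'⟩ := Nat.exists_not_and_succ_of_not_zero_of_exists hv0 he
  have P : t.HasPrimitiveVectorWith ((toEnd R L M e ^ r) v) (c + 2 * r) :=
    ⟨hr, lie_h_toEnd_e_pow t hv r, by
      rwa [pow_succ', End.mul_apply, toEnd_apply_apply] at hr'⟩
  obtain ⟨n, hn, -⟩ := exists_nat_eq_of_hasPrimitiveVectorWith P (hf _)
  exact ⟨n - 2 * r, by push_cast; linear_combination hn⟩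

lemma eq_zero_of_toEnd_f_pow_eq_zero (t : IsSl2Triple h e f) {r p : ℕ}
    (he : (toEnd R L M e ^ r) v = 0) (hv : ⁅h, v⁆ = (p : R) • v)
    (hf : (toEnd R L M f ^ p) v = 0) : v = 0 := by
  induction r generalizing p v with
  | zero => simpa using he
  | succ r ih =>
    have f_pow_succ : (toEnd R L M f ^ (p + 1)) v = 0 := by
      rw [pow_succ', End.mul_apply, hf, map_zero]
    have f_pow_add_two : (toEnd R L M f ^ (p + 1 + 1)) v = 0 := by
      rw [pow_succ', End.mul_apply, f_pow_succ, map_zero]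
    have lie_e_v : ⁅e, v⁆ = 0 := by
      refine ih (p := p + 2) (by rwa [pow_succ, End.mul_apply, toEnd_apply_apply] at he) ?_ ?_
      · simpa [add_comm] using lie_h_toEnd_e_pow t hv 1
      · have := lie_e_toEnd_f_pow_succ t hv (p + 1)
        rw [f_pow_add_two, f_pow_succ, lie_zero, smul_zero, add_zero] at this
        exact this.symm
    by_contra hv0
    obtain ⟨n, hpn, hn⟩ :=
      exists_nat_eq_of_hasPrimitiveVectorWith (t := t) ⟨hv0, hv, lie_e_v⟩ ⟨p, hf⟩
    exact hn (Nat.cast_injective hpn ▸ hf)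

end Sl2

section Irreducible

open LieModule Module

variable {k L M : Type*} [Field k] [LieRing L] [LieAlgebra k L] [AddCommGroup M] [Module k M]
  [LieRingModule L M] [LieModule k L M] [IsIrreducible k L M]

lemma lie_eq_smul_of_central {z : L} (hz : ∀ x : L, ⁅z, x⁆ = 0) {c : k} {v : M} (hv0 : v ≠ 0)
    (hv : ⁅z, v⁆ = c • v) (w : M) : ⁅z, w⁆ = c • w := by
  let N : LieSubmodule k L M :=
    { End.eigenspace (toEnd k L M z) c with
      lie_mem := fun {x m} (hm : m ∈ End.eigenspace (toEnd k L M z) c) ↦ by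
        rw [End.mem_eigenspace_iff, toEnd_apply_apply] at hm
        change ⁅x, m⁆ ∈ End.eigenspace (toEnd k L M z) c
        rw [End.mem_eigenspace_iff, toEnd_apply_apply, leibniz_lie, hz, zero_lie, zero_add, hm,
          lie_smul] }
  have hN : N = ⊤ := (eq_bot_or_eq_top N).resolve_left fun h ↦
    hv0 ((LieSubmodule.eq_bot_iff N).mp h v (End.mem_eigenspace_iff.mpr hv))
  exact End.mem_eigenspace_iff.mp (hN.ge (LieSubmodule.mem_top w))

lemma lie_eq_zero_of_mem_lieIdeal {I : LieIdeal k L} {v : M} (hv0 : v ≠ 0)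
    (hv : ∀ z ∈ I, ⁅z, v⁆ = 0) {z : L} (hz : z ∈ I) (w : M) : ⁅z, w⁆ = 0 := by
  let N : LieSubmodule k L M :=
    { carrier := {w | ∀ z ∈ I, ⁅z, w⁆ = 0}
      add_mem' := fun hu hw z hz ↦ by rw [lie_add, hu z hz, hw z hz, add_zero]
      zero_mem' := fun z _ ↦ lie_zero z
      smul_mem' := fun c w hw z hz ↦ by rw [lie_smul, hw z hz, smul_zero]
      lie_mem := fun {x w} hw z hz ↦ by
        rw [leibniz_lie, hw z hz, lie_zero, add_zero, hw _ (lie_mem_left k L I z x hz)] }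
  have hN : N = ⊤ := (eq_bot_or_eq_top N).resolve_left fun h ↦
    hv0 ((LieSubmodule.eq_bot_iff N).mp h v hv)
  exact hN.ge (LieSubmodule.mem_top w) z hz

end Irreducible

lemma exists_dual_eq_smul {k X W : Type*} [Field k] [AddCommGroup X] [Module k X]
    [AddCommGroup W] [Module k W] (φ : X →ₗ[k] W) {w : W} (hw : w ≠ 0)
    (h : ∀ x, φ x ∈ Submodule.span k {w}) : ∃ χ : Module.Dual k X, ∀ x, φ x = χ x • w := by
  refine ⟨(LinearEquiv.toSpanNonzeroSingleton k W w hw).symm.toLinearMap ∘ₗ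
    φ.codRestrict _ h, fun x ↦ ?_⟩
  have := (LinearEquiv.toSpanNonzeroSingleton k W w hw).apply_symm_apply (φ.codRestrict _ h x)
  exact (congrArg Subtype.val this).symm

section RootSystem

open LieAlgebra LieAlgebra.IsKilling LieModule Module

lemma eq_top_of_lie_cartan_mem {k g : Type*} [CommRing k] [LieRing g] [LieAlgebra k g]
    [IsSemisimple k g] {H : LieSubalgebra k g} [H.IsCartanSubalgebra] {T : LieIdeal k g}
    (hT : ∀ h ∈ H, ∀ x : g, ⁅h, x⁆ ∈ T) : T = ⊤ := by
  obtain ⟨I, hTI⟩ := exists_isCompl T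
  have lie_eq_zero {h y : g} (hh : h ∈ H) (hy : y ∈ I) : ⁅h, y⁆ = 0 := by
    have : ⁅h, y⁆ ∈ T ⊓ I := ⟨hT h hh y, lie_mem_right k g I h y hy⟩
    rwa [hTI.inf_eq_bot, LieSubmodule.mem_bot] at this
  have le_cartan {y : g} (hy : y ∈ I) : y ∈ H := by
    rw [← LieSubalgebra.IsCartanSubalgebra.self_normalizing (H := H),
      LieSubalgebra.mem_normalizer_iff']
    exact fun h hh ↦ lie_eq_zero hh hy ▸ H.zero_mem
  have : IsLieAbelian I :=
    ⟨fun y z ↦ Subtype.ext (lie_eq_zero (le_cartan y.2) z.2)⟩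
  have hI : I = ⊥ := HasTrivialRadical.eq_bot_of_isSolvable I
  simpa [hI] using hTI.sup_eq_top

lemma exists_isSl2Triple_apply_ne_zero {k g : Type*} [Field k] [CharZero k] [LieRing g]
    [LieAlgebra k g] [FiniteDimensional k g] [IsKilling k g] {H : LieSubalgebra k g}
    [H.IsCartanSubalgebra] [IsTriangularizable k H g] {l : Dual k H} (hl : l ≠ 0) :
    ∃ (α : Weight k H g) (h : H) (e f : g), α.IsNonZero ∧ IsSl2Triple (h : g) e f ∧
      e ∈ rootSpace H α ∧ f ∈ rootSpace H (-α) ∧ l h ≠ 0 := by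
  obtain ⟨α, hα, hlα⟩ : ∃ α : Weight k H g, α.IsNonZero ∧ l (coroot α) ≠ 0 := by
    by_contra! l_coroot
    refine hl (LinearMap.ker_eq_top.mp (eq_top_iff.mpr ?_))
    rw [← RootPairing.IsRootSystem.span_coroot_eq_top (P := rootSystem H), Submodule.span_le]
    rintro _ ⟨α, rfl⟩
    exact l_coroot α (Finset.mem_filter.mp α.2).2
  obtain ⟨h, e, f, t, he, hf⟩ := exists_isSl2Triple_of_weight_isNonZero hα
  obtain rfl := t.h_eq_coroot hα he hf
  exact ⟨α, coroot α, e, f, hα, t, he, hf, hlα⟩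

end RootSystem

lemma exists_forall_le_of_le_add_mul {φ : ℤ → ℕ} {p : ℕ} (hp : p ≠ 0)
    (h : ∀ j m, φ j ≤ φ (j + p * m)) : ∃ B, ∀ j, φ j ≤ B := by
  refine ⟨∑ r ∈ Finset.Ico (0 : ℤ) p, φ r, fun j ↦ ?_⟩
  have hp' : (0 : ℤ) < p := by omega
  calc φ j ≤ φ (j + p * -(j / p)) := h j _
    _ = φ (j % p) := by rw [mul_neg, ← sub_eq_add_neg, ← Int.emod_def]
    _ ≤ ∑ r ∈ Finset.Ico (0 : ℤ) p, φ r := Finset.single_le_sum (fun _ _ ↦ Nat.zero_le _)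
      (Finset.mem_Ico.mpr ⟨Int.emod_nonneg j hp'.ne', Int.emod_lt_of_pos j hp'⟩)

namespace LoopAffVir

open LieModule Module

variable {g A L : Type*} [LieRing g] [LieAlgebra ℂ g] [CommRing A] [Algebra ℂ A]
  [LieRing L] [LieAlgebra ℂ L] {S : LoopAffVir g A L}

variable (S) in
lemma eq_top_of_generators_mem {W : Submodule ℂ L} (hE : ∀ n x a, S.E n x a ∈ W)
    (hD : ∀ n a, S.D n a ∈ W) (hK : ∀ a, S.K a ∈ W) (hC : ∀ a, S.C a ∈ W) : W = ⊤ := by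
  rw [eq_top_iff, ← S.span_top, Submodule.span_le]
  rintro _ (((⟨n, x, a, rfl⟩ | ⟨n, a, rfl⟩) | ⟨a, rfl⟩) | ⟨a, rfl⟩)
  exacts [hE n x a, hD n a, hK a, hC a]

section LoopIdeal

variable (S) in
/-- The elements `z ⊗ a` with `a ∈ I` and `z` one of the generators of `𝔏`. -/
def loopIdealGenerators (I : Ideal A) : Set L :=
  {z | ∃ a ∈ I, (∃ n x, z = S.E n x a) ∨ (∃ n, z = S.D n a) ∨ z = S.K a ∨ z = S.C a}

variable {I : Ideal A} {a : A}

lemma E_mem_span_loopIdealGenerators (ha : a ∈ I) (n : ℤ) (x : g) :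
    S.E n x a ∈ Submodule.span ℂ (S.loopIdealGenerators I) :=
  Submodule.subset_span ⟨a, ha, .inl ⟨n, x, rfl⟩⟩

lemma D_mem_span_loopIdealGenerators (ha : a ∈ I) (n : ℤ) :
    S.D n a ∈ Submodule.span ℂ (S.loopIdealGenerators I) :=
  Submodule.subset_span ⟨a, ha, .inr (.inl ⟨n, rfl⟩)⟩

lemma K_mem_span_loopIdealGenerators (ha : a ∈ I) :
    S.K a ∈ Submodule.span ℂ (S.loopIdealGenerators I) :=
  Submodule.subset_span ⟨a, ha, .inr (.inr (.inl rfl))⟩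

lemma C_mem_span_loopIdealGenerators (ha : a ∈ I) :
    S.C a ∈ Submodule.span ℂ (S.loopIdealGenerators I) :=
  Submodule.subset_span ⟨a, ha, .inr (.inr (.inr rfl))⟩

lemma lie_mem_span_loopIdealGenerators {z : L} (hz : z ∈ S.loopIdealGenerators I) (w : L) :
    ⁅z, w⁆ ∈ Submodule.span ℂ (S.loopIdealGenerators I) := by
  set N := Submodule.span ℂ (S.loopIdealGenerators I)
  suffices h : N.comap (toEnd ℂ L L z) = ⊤ from h.ge (Submodule.mem_top (x := w))
  have lie_K_mem (b : A) : ⁅z, S.K b⁆ ∈ N := by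
    rw [← lie_skew, S.K_central, neg_zero]
    exact N.zero_mem
  have lie_C_mem (b : A) : ⁅z, S.C b⁆ ∈ N := by
    rw [← lie_skew, S.C_central, neg_zero]
    exact N.zero_mem
  obtain ⟨a, ha, ⟨n, x, rfl⟩ | ⟨n, rfl⟩ | rfl | rfl⟩ := hz
  · refine S.eq_top_of_generators_mem (fun m y b ↦ ?_) (fun m b ↦ ?_) lie_K_mem lie_C_mem
    · rw [Submodule.mem_comap, toEnd_apply_apply, S.lie_EE]
      exact N.add_mem (E_mem_span_loopIdealGenerators (I.mul_mem_right b ha) _ _)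
        (N.smul_mem _ (K_mem_span_loopIdealGenerators (I.mul_mem_right b ha)))
    · rw [Submodule.mem_comap, toEnd_apply_apply, ← lie_skew, S.lie_DE]
      exact N.neg_mem (N.smul_mem _ (E_mem_span_loopIdealGenerators (I.mul_mem_left b ha) _ _))
  · refine S.eq_top_of_generators_mem (fun m y b ↦ ?_) (fun m b ↦ ?_) lie_K_mem lie_C_mem
    · rw [Submodule.mem_comap, toEnd_apply_apply, S.lie_DE]
      exact N.smul_mem _ (E_mem_span_loopIdealGenerators (I.mul_mem_right b ha) _ _)
    · rw [Submodule.mem_comap, toEnd_apply_apply, S.lie_DD]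
      exact N.add_mem (N.smul_mem _ (D_mem_span_loopIdealGenerators (I.mul_mem_right b ha) _))
        (N.smul_mem _ (C_mem_span_loopIdealGenerators (I.mul_mem_right b ha)))
  · exact eq_top_iff.mpr fun w _ ↦ by simp [S.K_central]
  · exact eq_top_iff.mpr fun w _ ↦ by simp [S.C_central]

variable (S I) in
/-- The Lie ideal `𝔏 ⊗ I` of `𝔏(A)`. -/
def loopIdeal : LieIdeal ℂ L where
  toSubmodule := Submodule.span ℂ (S.loopIdealGenerators I)
  lie_mem {w z} hz := by
    suffices h : Submodule.span ℂ (S.loopIdealGenerators I) ≤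
        (Submodule.span ℂ (S.loopIdealGenerators I)).comap (toEnd ℂ L L w) from h hz
    refine Submodule.span_le.mpr fun z hz ↦ ?_
    rw [SetLike.mem_coe, Submodule.mem_comap, toEnd_apply_apply, ← lie_skew]
    exact neg_mem (lie_mem_span_loopIdealGenerators hz w)

end LoopIdeal

variable {V : Type*} [AddCommGroup V] [Module ℂ V] [LieRingModule L V] [LieModule ℂ L V]

section Brackets

variable (S) (n m : ℤ) (x y : g) (a b : A) (v : V)

lemma E_E_apply :
    ⁅S.E n x a, ⁅S.E m y b, v⁆⁆ = ⁅S.E m y b, ⁅S.E n x a, v⁆⁆ + ⁅S.E (n + m) ⁅x, y⁆ (a * b), v⁆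
      + (if m = -n then (n : ℂ) * S.form x y else 0) • ⁅S.K (a * b), v⁆ := by
  rw [leibniz_lie, S.lie_EE, add_lie, smul_lie]
  abel

lemma D_E_apply :
    ⁅S.D n a, ⁅S.E m x b, v⁆⁆ = ⁅S.E m x b, ⁅S.D n a, v⁆⁆
      + (m : ℂ) • ⁅S.E (m + n) x (a * b), v⁆ := by
  rw [leibniz_lie, S.lie_DE, smul_lie]
  abel

lemma D_D_apply :
    ⁅S.D n a, ⁅S.D m b, v⁆⁆ = ⁅S.D m b, ⁅S.D n a, v⁆⁆
      + ((m : ℂ) - n) • ⁅S.D (n + m) (a * b), v⁆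
      + (if m = -n then ((n : ℂ) ^ 3 - n) / 12 else 0) • ⁅S.C (a * b), v⁆ := by
  rw [leibniz_lie, S.lie_DD, add_lie, smul_lie, smul_lie]
  abel

end Brackets

section Annihilator

lemma lie_K_eq_zero_of_mem_sq [Nontrivial g] {I : Ideal A} {v : V}
    (hE : ∀ n x, ∀ a ∈ I, ⁅S.E n x a, v⁆ = 0) {a : A} (ha : a ∈ I * I) : ⁅S.K a, v⁆ = 0 := by
  obtain ⟨x, hx⟩ := exists_ne (0 : g)
  obtain ⟨y, hxy⟩ : ∃ y, S.form x y ≠ 0 := by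
    by_contra! h
    exact hx (S.form_nondeg x h)
  induction ha using Submodule.mul_induction_on' with
  | mem_mul_mem a ha b hb =>
    have := S.E_E_apply 1 (-1) x y a b v
    rw [hE _ _ b hb, hE _ _ a ha, hE _ _ _ (I.mul_mem_left a hb), lie_zero, lie_zero, if_pos rfl,
      zero_add, zero_add, Int.cast_one, one_mul, eq_comm] at this
    exact (smul_eq_zero.mp this).resolve_left hxy
  | add a _ b _ ha hb => rw [map_add, add_lie, ha, hb, add_zero]

lemma lie_C_eq_zero_of_mem_sq {I : Ideal A} {v : V}
    (hD : ∀ n, ∀ a ∈ I, ⁅S.D n a, v⁆ = 0) {a : A} (ha : a ∈ I * I) : ⁅S.C a, v⁆ = 0 := by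
  induction ha using Submodule.mul_induction_on' with
  | mem_mul_mem a ha b hb =>
    have := S.D_D_apply 2 (-2) a b v
    rw [hD _ b hb, hD _ a ha, hD _ _ (I.mul_mem_left a hb), lie_zero, lie_zero, if_pos rfl,
      smul_zero, zero_add, zero_add, eq_comm] at this
    exact (smul_eq_zero.mp this).resolve_left (by norm_num)
  | add a _ b _ ha hb => rw [map_add, add_lie, ha, hb, add_zero]

lemma annihilates_of_lie_eq_zero [IsIrreducible ℂ L V] {I : Ideal A} {v : V} (hv0 : v ≠ 0)
    (hv : ∀ z ∈ S.loopIdealGenerators I, ⁅z, v⁆ = 0) : S.Annihilates V I := by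
  have loopIdeal_v : ∀ z ∈ S.loopIdeal I, ⁅z, v⁆ = 0 := by
    suffices h : Submodule.span ℂ (S.loopIdealGenerators I) ≤
        LinearMap.ker ((toEnd ℂ L V : L →ₗ[ℂ] End ℂ V).flip v) from h
    exact Submodule.span_le.mpr hv
  have kills {z : L} (hz : z ∈ Submodule.span ℂ (S.loopIdealGenerators I)) (w : V) : ⁅z, w⁆ = 0 :=
    lie_eq_zero_of_mem_lieIdeal (I := S.loopIdeal I) hv0 loopIdeal_v hz w
  exact fun a ha ↦ ⟨fun n x ↦ kills (E_mem_span_loopIdealGenerators ha n x),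
    fun n ↦ kills (D_mem_span_loopIdealGenerators ha n), kills (K_mem_span_loopIdealGenerators ha),
    kills (C_mem_span_loopIdealGenerators ha)⟩

lemma annihilates_sq [IsIrreducible ℂ L V] [Nontrivial g] {I : Ideal A} {v : V} (hv0 : v ≠ 0)
    (hE : ∀ n x, ∀ a ∈ I, ⁅S.E n x a, v⁆ = 0) (hD : ∀ n, ∀ a ∈ I, ⁅S.D n a, v⁆ = 0) :
    S.Annihilates V (I * I) := by
  refine annihilates_of_lie_eq_zero hv0 ?_
  rintro _ ⟨a, ha, ⟨n, x, rfl⟩ | ⟨n, rfl⟩ | rfl | rfl⟩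
  · exact hE n x a (Ideal.mul_le_left ha)
  · exact hD n a (Ideal.mul_le_left ha)
  · exact lie_K_eq_zero_of_mem_sq hE ha
  · exact lie_C_eq_zero_of_mem_sq hD ha

end Annihilator

section JointEigenspace

variable (S V) in
/-- The simultaneous eigenspace of `h̊ ⊗ 1` and `d₀ ⊗ 1` for the eigenvalues `l` and `μ`. It is a
weight space of `h̄`, up to forgetting the scalars by which `K ⊗ 1` and `C ⊗ 1` act. -/
def jointEigenspace (l : Dual ℂ S.H) (μ : ℂ) : Submodule ℂ V :=
  (⨅ h : S.H, End.eigenspace (toEnd ℂ L V (S.E 0 h 1)) (l h)) ⊓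
    End.eigenspace (toEnd ℂ L V (S.D 0 1)) μ

variable {l α : Dual ℂ S.H} {μ : ℂ} {v : V}

lemma mem_jointEigenspace : v ∈ S.jointEigenspace V l μ ↔
    (∀ h : S.H, ⁅S.E 0 h 1, v⁆ = l h • v) ∧ ⁅S.D 0 1, v⁆ = μ • v := by
  simp [jointEigenspace]

lemma D_mem_jointEigenspace (hv : v ∈ S.jointEigenspace V l μ) (n : ℤ) (a : A) :
    ⁅S.D n a, v⁆ ∈ S.jointEigenspace V l (μ + n) := by
  rw [mem_jointEigenspace] at hv ⊢
  refine ⟨fun h ↦ ?_, ?_⟩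
  · have := S.D_E_apply n 0 (h : g) a 1 v
    rw [Int.cast_zero, zero_smul, add_zero, hv.1, lie_smul] at this
    exact this.symm
  · rw [S.D_D_apply, hv.2, lie_smul, zero_add, one_mul]
    simp [add_smul]

lemma D_zero_mem_jointEigenspace (hv : v ∈ S.jointEigenspace V l μ) (a : A) :
    ⁅S.D 0 a, v⁆ ∈ S.jointEigenspace V l μ := by
  simpa using D_mem_jointEigenspace hv 0 a

lemma E_mem_jointEigenspace (hv : v ∈ S.jointEigenspace V l μ) (n : ℤ) {x : g}
    (hx : x ∈ S.rootSp α) (a : A) : ⁅S.E n x a, v⁆ ∈ S.jointEigenspace V (l + α) (μ + n) := by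
  rw [mem_jointEigenspace] at hv ⊢
  refine ⟨fun h ↦ ?_, ?_⟩
  · rw [S.E_E_apply, hv.1, lie_smul, (S.rootSp_def α x).mp hx h, zero_add, one_mul]
    simp [add_smul]
  · rw [S.D_E_apply, hv.2, lie_smul, add_zero, one_mul]
    simp [add_smul]

lemma E_pow_mem_jointEigenspace (hv : v ∈ S.jointEigenspace V l μ) (n : ℤ) {x : g}
    (hx : x ∈ S.rootSp α) (a : A) (k : ℕ) :
    (toEnd ℂ L V (S.E n x a) ^ k) v ∈ S.jointEigenspace V (l + (k : ℂ) • α) (μ + k * n) := by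
  induction k with
  | zero => simpa using hv
  | succ k ih =>
    rw [pow_succ', End.mul_apply, toEnd_apply_apply]
    convert E_mem_jointEigenspace ih n hx a using 2
    · push_cast; module
    · push_cast; ring

variable (V) in
lemma exists_wtSpace_le_jointEigenspace (χ : Dual ℂ S.cartan) :
    ∃ l : Dual ℂ S.H, S.wtSpace V χ ≤ S.jointEigenspace V l (χ S.d0) := by
  let eHₗ : S.H →ₗ[ℂ] S.cartan :=
    { toFun := S.eH
      map_add' := fun h h' ↦ by ext; simp [eH]
      map_smul' := fun c h ↦ by ext; simp [eH] }
  exact ⟨χ ∘ₗ eHₗ, fun v hv ↦ mem_jointEigenspace.mpr ⟨fun h ↦ hv (S.eH h), hv S.d0⟩⟩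

lemma finiteDimensional_jointEigenspace (hfd : S.HasFinDimWeightSpaces V)
    (hK0 : ∀ v : V, ⁅S.K 1, v⁆ = 0) {c : ℂ} (hC : ∀ v : V, ⁅S.C 1, v⁆ = c • v) (l : Dual ℂ S.H)
    (μ : ℂ) : FiniteDimensional ℂ (S.jointEigenspace V l μ) := by
  set U := S.jointEigenspace V l μ
  rcases eq_or_ne U ⊥ with hU | hU
  · rw [hU]
    infer_instance
  let restrictToU : L →ₗ[ℂ] U →ₗ[ℂ] V :=
    LinearMap.lcomp ℂ V U.subtype ∘ₗ (toEnd ℂ L V : L →ₗ[ℂ] End ℂ V)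
  have cartan_le : S.cartan ≤ (Submodule.span ℂ {U.subtype}).comap restrictToU := by
    refine Submodule.span_le.mpr fun z hz ↦ Submodule.mem_span_singleton.mpr ?_
    obtain ⟨h, hh, rfl⟩ | rfl | rfl | rfl := hz
    · exact ⟨l ⟨h, hh⟩, LinearMap.ext fun u ↦ ((mem_jointEigenspace.mp u.2).1 ⟨h, hh⟩).symm⟩
    · exact ⟨0, LinearMap.ext fun u ↦ (zero_smul ℂ (u : V)).trans (hK0 u).symm⟩
    · exact ⟨μ, LinearMap.ext fun u ↦ (mem_jointEigenspace.mp u.2).2.symm⟩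
    · exact ⟨c, LinearMap.ext fun u ↦ (hC u).symm⟩
  have subtype_ne_zero : U.subtype ≠ 0 := by
    obtain ⟨u, hu, hu0⟩ := Submodule.exists_mem_ne_zero_of_ne_bot hU
    exact fun h ↦ hu0 (LinearMap.congr_fun h ⟨u, hu⟩)
  obtain ⟨χ, hχ⟩ := exists_dual_eq_smul (restrictToU ∘ₗ S.cartan.subtype) subtype_ne_zero
    fun z ↦ cartan_le z.2
  have := hfd χ
  exact Submodule.finiteDimensional_of_le (S₂ := S.wtSpace V χ) fun u hu z ↦
    LinearMap.congr_fun (hχ z) ⟨u, hu⟩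

lemma exists_wtSpace_ne_bot [Nontrivial V] (hw : S.IsWeightModule V) :
    ∃ χ : Dual ℂ S.cartan, S.wtSpace V χ ≠ ⊥ := by
  by_contra! h
  rw [IsWeightModule, iSup_congr h, iSup_bot] at hw
  exact bot_ne_top hw

lemma exists_jointEigenspace_ne_bot [Nontrivial V] (hw : S.IsWeightModule V) :
    ∃ l μ, S.jointEigenspace V l μ ≠ ⊥ := by
  obtain ⟨χ, hχ⟩ := exists_wtSpace_ne_bot hw
  obtain ⟨l, hl⟩ := exists_wtSpace_le_jointEigenspace V χ
  exact ⟨l, _, ne_bot_of_le_ne_bot hχ hl⟩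

lemma exists_lie_C_eq_smul [IsIrreducible ℂ L V] (hw : S.IsWeightModule V) :
    ∃ c : ℂ, ∀ v : V, ⁅S.C 1, v⁆ = c • v := by
  have := LieModule.nontrivial_of_isIrreducible ℂ L V
  obtain ⟨χ, hχ⟩ := exists_wtSpace_ne_bot hw
  obtain ⟨v, hv, hv0⟩ := Submodule.exists_mem_ne_zero_of_ne_bot hχ
  exact ⟨χ S.C1, lie_eq_smul_of_central (S.C_central 1) hv0 (hv S.C1)⟩

end JointEigenspace

section Virasoro

variable (S V) in
/-- The restriction of an `𝔏(A)`-module to `Vir ⊗ A`. -/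
noncomputable def virRep : VirRep ℂ A V where
  d n := (toEnd ℂ L V : L →ₗ[ℂ] End ℂ V) ∘ₗ S.D n
  c := (toEnd ℂ L V : L →ₗ[ℂ] End ℂ V) ∘ₗ S.C
  lie_d_d n m a b := LinearMap.ext fun v ↦
    sub_eq_iff_eq_add'.mpr ((S.D_D_apply n m a b v).trans (add_assoc _ _ _))
  commute_c_d a n b := LinearMap.ext fun v ↦
    (leibniz_lie _ _ v).trans (by rw [S.C_central, zero_lie, zero_add]; rfl)

lemma virRep_d_apply (n : ℤ) (a : A) (v : V) : (S.virRep V).d n a v = ⁅S.D n a, v⁆ := rfl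

end Virasoro

section RootVectors

/-- The annihilator in `A` of a `d₀ ⊗ A`-stable subspace `U` under `(g̊ ⊗ t) ⊗ A`. Stability makes
it an ideal, because `(x ⊗ t) ⊗ ab = [d₀ ⊗ a, (x ⊗ t) ⊗ b]`. -/
def annE {U : Submodule ℂ V} (hU : ∀ a, ∀ u ∈ U, ⁅S.D 0 a, u⁆ ∈ U) : Ideal A where
  carrier := {b | ∀ x, ∀ u ∈ U, ⁅S.E 1 x b, u⁆ = 0}
  add_mem' hb hc x u hu := by rw [map_add, add_lie, hb x u hu, hc x u hu, add_zero]
  zero_mem' x u _ := by rw [map_zero, zero_lie]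
  smul_mem' a b hb x u hu := by
    have := S.D_E_apply 0 1 x a b u
    rw [hb x u hu, hb x _ (hU a u hu), lie_zero, zero_add, Int.cast_one, one_smul, add_zero] at this
    exact this.symm

variable [FiniteDimensional ℂ g] [LieAlgebra.IsKilling ℂ g]
  [∀ l μ, FiniteDimensional ℂ (S.jointEigenspace V l μ)] {l : Dual ℂ S.H} {μ : ℂ}

lemma finite_quotient_annE :
    Module.Finite ℂ (A ⧸ annE fun a u (hu : u ∈ S.jointEigenspace V l μ) ↦
      D_zero_mem_jointEigenspace hu a) := by
  have := S.isCartan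
  set U := S.jointEigenspace V l μ
  let action : A →ₗ[ℂ] g →ₗ[ℂ] U →ₗ[ℂ] V :=
    (S.E 1).flip.compr₂ (LinearMap.lcomp ℂ V U.subtype ∘ₗ (toEnd ℂ L V : L →ₗ[ℂ] End ℂ V))
  let W : Submodule ℂ V :=
    ⨆ α : Weight ℂ S.H g, S.jointEigenspace V (l + α.toLinear) (μ + (1 : ℤ))
  have action_mem (b : A) (x : g) (u : U) : action b x u ∈ W := by
    suffices h : W.comap ((action b).flip u) = ⊤ from h.ge (Submodule.mem_top (x := x))
    rw [eq_top_iff, ← LieSubmodule.top_toSubmodule (R := ℂ) (L := S.H),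
      ← iSup_genWeightSpace_eq_top' ℂ S.H g, LieSubmodule.iSup_toSubmodule]
    refine iSup_le fun α x hx ↦ Submodule.mem_iSup_of_mem α ?_
    exact E_mem_jointEigenspace u.2 1 ((S.rootSp_def _ _).mpr fun h ↦
      LieAlgebra.IsKilling.lie_eq_smul_of_mem_rootSpace hx h) b
  have cofg := (cofg_ker_and_finrank_le
    ((TensorProduct.lift.equiv (.id ℂ) g U V).toLinearMap ∘ₗ action) W fun b t ↦ by
      induction t with
      | zero => rw [map_zero]; exact W.zero_mem
      | tmul x u => exact action_mem b x u
      | add s t hs ht => rw [map_add]; exact W.add_mem hs ht).1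
  rw [← cofg_restrictScalars_iff]
  exact cofg.of_le fun b hb x u hu ↦ LinearMap.congr_fun hb (x ⊗ₜ ⟨u, hu⟩)

lemma exists_annihilates_of_lie_D_eq_zero [IsIrreducible ℂ L V] [Nontrivial g]
    [IsNoetherianRing A] {I : Ideal A} (hI : Module.Finite ℂ (A ⧸ I))
    (hU : S.jointEigenspace V l μ ≠ ⊥)
    (hD : ∀ n, ∀ a ∈ I, ∀ u ∈ S.jointEigenspace V l μ, ⁅S.D n a, u⁆ = 0) :
    ∃ R : Ideal A, IsCofiniteIdeal R ∧ S.Annihilates V R := by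
  obtain ⟨v, hv, hv0⟩ := Submodule.exists_mem_ne_zero_of_ne_bot hU
  set J := annE fun a u (hu : u ∈ S.jointEigenspace V l μ) ↦ D_zero_mem_jointEigenspace hu a
  have hIJ : Module.Finite ℂ (A ⧸ I * J) :=
    finite_quotient_mul (IsNoetherian.noetherian _) hI finite_quotient_annE
  refine ⟨_, finite_quotient_mul (IsNoetherian.noetherian _) hIJ hIJ,
    annihilates_sq hv0 (fun n x c hc ↦ ?_) fun n c hc ↦ hD n c (Ideal.mul_le_left hc) v hv⟩
  induction hc using Submodule.mul_induction_on' with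
  | mem_mul_mem a ha b hb =>
    have := S.D_E_apply (n - 1) 1 x a b v
    rw [hb x v hv, hD _ a ha v hv, lie_zero, lie_zero, zero_add, Int.cast_one, one_smul,
      add_sub_cancel] at this
    exact this.symm
  | add a _ b _ ha hb => rw [map_add, add_lie, ha, hb, add_zero]

end RootVectors

section RootNilpotent

variable (S V) in
/-- The part of integrability that the argument uses: the root vectors `(x ⊗ tⁿ) ⊗ 1` act locally
nilpotently. -/
def IsRootNilpotent : Prop :=
  ∀ α : Dual ℂ S.H, α ≠ 0 → ∀ x ∈ S.rootSp α, ∀ (n : ℤ) (v : V),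
    ∃ N, (toEnd ℂ L V (S.E n x 1) ^ N) v = 0

lemma IsIntegrable.isRootNilpotent (hV : S.IsIntegrable V) : S.IsRootNilpotent V := by
  intro α hα x hx n v
  rcases eq_or_ne (S.rootSp α) ⊥ with hα' | hα'
  · obtain rfl : x = 0 := by rwa [hα', Submodule.mem_bot] at hx
    exact ⟨1, by simp⟩
  · exact hV.2.2 α hα hα' x hx n 1 v

/-- The `𝔰𝔩₂`-triple of the real root `α + nδ`; its coroot differs from that of `α` by a multiple of
the central `K`. -/
lemma exists_isSl2Triple_E (hK0 : ∀ v : V, ⁅S.K 1, v⁆ = 0) {h e f : g} (t : IsSl2Triple h e f)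
    {v : V} (hv : ⁅S.E 0 h 1, v⁆ ≠ 0) {n m : ℤ} (hnm : n + m = 0) :
    ∃ h', IsSl2Triple h' (S.E n e 1) (S.E m f 1) ∧ ∀ w : V, ⁅h', w⁆ = ⁅S.E 0 h 1, w⁆ := by
  have lie_eq (s : ℂ) (w : V) : ⁅S.E 0 h 1 + s • S.K 1, w⁆ = ⁅S.E 0 h 1, w⁆ := by
    rw [add_lie, smul_lie, hK0, smul_zero, add_zero]
  refine ⟨S.E 0 h 1 + ((n : ℂ) * S.form e f) • S.K 1, ⟨fun h0 ↦ hv ?_, ?_, ?_, ?_⟩, lie_eq _⟩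
  · rw [← lie_eq ((n : ℂ) * S.form e f) v, h0, zero_lie]
  · rw [S.lie_EE, if_pos (by omega), t.lie_e_f, hnm, mul_one]
  · rw [add_lie, smul_lie, S.K_central, S.lie_EE, t.lie_h_e_nsmul]
    simp
  · rw [add_lie, smul_lie, S.K_central, S.lie_EE, t.lie_h_f_nsmul]
    simp

variable {l α : Dual ℂ S.H} {h : S.H} {e f : g}

lemma finrank_jointEigenspace_le [∀ l μ, FiniteDimensional ℂ (S.jointEigenspace V l μ)]
    (hN : S.IsRootNilpotent V) (hK0 : ∀ v : V, ⁅S.K 1, v⁆ = 0) (hα : α ≠ 0)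
    (he : e ∈ S.rootSp α) (hf : f ∈ S.rootSp (-α)) (t : IsSl2Triple (h : g) e f) {p : ℕ}
    (hp0 : p ≠ 0) (hp : l h = p) (μ : ℂ) (m : ℤ) :
    finrank ℂ (S.jointEigenspace V l μ) ≤ finrank ℂ (S.jointEigenspace V l (μ + p * m)) := by
  let T : End ℂ V := toEnd ℂ L V (S.E m e 1) ^ p * toEnd ℂ L V (S.E 0 f 1) ^ p
  have T_mem : ∀ v ∈ S.jointEigenspace V l μ, T v ∈ S.jointEigenspace V l (μ + p * m) := by
    intro v hv
    have := E_pow_mem_jointEigenspace (E_pow_mem_jointEigenspace hv 0 hf 1 p) m he 1 p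
    rwa [smul_neg, neg_add_cancel_right, Int.cast_zero, mul_zero, add_zero] at this
  refine LinearMap.finrank_le_finrank_of_injective (f := T.restrict T_mem) ?_
  rw [injective_iff_map_eq_zero]
  rintro ⟨v, hv⟩ hTv
  have T_v : (toEnd ℂ L V (S.E m e 1) ^ p) ((toEnd ℂ L V (S.E 0 f 1) ^ p) v) = 0 :=
    congrArg Subtype.val hTv
  have lie_h_v : ⁅S.E 0 (h : g) 1, v⁆ = (p : ℂ) • v := hp ▸ (mem_jointEigenspace.mp hv).1 h
  rw [Submodule.mk_eq_zero]
  by_contra hv0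
  have lie_h_v_ne : ⁅S.E 0 (h : g) 1, v⁆ ≠ 0 :=
    lie_h_v ▸ smul_ne_zero (Nat.cast_ne_zero.mpr hp0) hv0
  obtain ⟨h₀, t₀, h₀_eq⟩ := exists_isSl2Triple_E hK0 t lie_h_v_ne (add_zero 0)
  obtain ⟨hₘ, tₘ, hₘ_eq⟩ := exists_isSl2Triple_E hK0 t lie_h_v_ne (add_neg_cancel m)
  obtain ⟨r, hr⟩ := hN α hα e he 0 v
  obtain ⟨s, hs⟩ := hN (-α) (neg_ne_zero.mpr hα) f hf (-m) ((toEnd ℂ L V (S.E 0 f 1) ^ p) v)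
  rw [← h₀_eq] at lie_h_v
  have lie_hₘ : ⁅-hₘ, (toEnd ℂ L V (S.E 0 f 1) ^ p) v⁆ =
      (p : ℂ) • (toEnd ℂ L V (S.E 0 f 1) ^ p) v := by
    rw [neg_lie, hₘ_eq, ← h₀_eq, lie_h_toEnd_f_pow t₀ lie_h_v]
    module
  exact hv0 (eq_zero_of_toEnd_f_pow_eq_zero t₀ hr lie_h_v
    (eq_zero_of_toEnd_f_pow_eq_zero tₘ.symm hs lie_hₘ T_v))

variable [FiniteDimensional ℂ g] [LieAlgebra.IsKilling ℂ g]

lemma exists_isSl2Triple_apply_eq_int (hN : S.IsRootNilpotent V)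
    (hK0 : ∀ v : V, ⁅S.K 1, v⁆ = 0) (hl : l ≠ 0) {μ : ℂ} (hU : S.jointEigenspace V l μ ≠ ⊥) :
    ∃ (α : Dual ℂ S.H) (h : S.H) (e f : g), α ≠ 0 ∧ IsSl2Triple (h : g) e f ∧ e ∈ S.rootSp α ∧
      f ∈ S.rootSp (-α) ∧ ∃ z : ℤ, z ≠ 0 ∧ l h = z := by
  have := S.isCartan
  obtain ⟨α, h, e, f, hα, t, he, hf, hlh⟩ := exists_isSl2Triple_apply_ne_zero hl
  replace he : e ∈ S.rootSp α.toLinear := (S.rootSp_def _ _).mpr fun k ↦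
    LieAlgebra.IsKilling.lie_eq_smul_of_mem_rootSpace he k
  replace hf : f ∈ S.rootSp (-α.toLinear) := (S.rootSp_def _ _).mpr fun k ↦
    LieAlgebra.IsKilling.lie_eq_smul_of_mem_rootSpace hf k
  have hα0 : α.toLinear ≠ 0 := fun h0 ↦ hα (funext (LinearMap.congr_fun h0))
  obtain ⟨v, hv, hv0⟩ := Submodule.exists_mem_ne_zero_of_ne_bot hU
  have lie_h_v := (mem_jointEigenspace.mp hv).1 h
  obtain ⟨h', t', h'_eq⟩ :=
    exists_isSl2Triple_E hK0 t (lie_h_v ▸ smul_ne_zero hlh hv0) (add_zero 0)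
  obtain ⟨z, hz⟩ := exists_int_eq_of_lie_h_eq_smul t' (hN _ hα0 e he 0 v)
    (hN _ (neg_ne_zero.mpr hα0) f hf 0) hv0 ((h'_eq v).trans lie_h_v)
  exact ⟨_, h, e, f, hα0, t, he, hf, z, Int.cast_ne_zero.mp (hz ▸ hlh), hz⟩

lemma exists_isSl2Triple_apply_eq_nat (hN : S.IsRootNilpotent V)
    (hK0 : ∀ v : V, ⁅S.K 1, v⁆ = 0) (hl : l ≠ 0) {μ : ℂ} (hU : S.jointEigenspace V l μ ≠ ⊥) :
    ∃ (α : Dual ℂ S.H) (h : S.H) (e f : g), α ≠ 0 ∧ IsSl2Triple (h : g) e f ∧ e ∈ S.rootSp α ∧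
      f ∈ S.rootSp (-α) ∧ ∃ p : ℕ, p ≠ 0 ∧ l h = p := by
  obtain ⟨α, h, e, f, hα, t, he, hf, z, hz0, hz⟩ := exists_isSl2Triple_apply_eq_int hN hK0 hl hU
  obtain ⟨p, rfl | rfl⟩ := z.eq_nat_or_neg
  · exact ⟨α, h, e, f, hα, t, he, hf, p, by simpa using hz0, by simpa using hz⟩
  · exact ⟨-α, -h, f, e, neg_ne_zero.mpr hα, t.symm, hf, by rwa [neg_neg], p, by simpa using hz0,
      by simp [hz]⟩

lemma exists_forall_finrank_jointEigenspace_le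
    [∀ l μ, FiniteDimensional ℂ (S.jointEigenspace V l μ)] (hN : S.IsRootNilpotent V)
    (hK0 : ∀ v : V, ⁅S.K 1, v⁆ = 0) (hl : l ≠ 0) {μ : ℂ} (hU : S.jointEigenspace V l μ ≠ ⊥) :
    ∃ B, ∀ j : ℤ, finrank ℂ (S.jointEigenspace V l (μ + j)) ≤ B := by
  obtain ⟨α, h, e, f, hα, t, he, hf, p, hp0, hp⟩ := exists_isSl2Triple_apply_eq_nat hN hK0 hl hU
  refine exists_forall_le_of_le_add_mul hp0 fun j m ↦ ?_
  have := finrank_jointEigenspace_le hN hK0 hα he hf t hp0 hp (μ + j) m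
  have hshift : μ + j + p * (m : ℂ) = μ + ((j + p * m : ℤ) : ℂ) := by
    push_cast
    ring
  rwa [hshift] at this

lemma exists_annihilates_of_weight_ne_zero [IsIrreducible ℂ L V] [Nontrivial g]
    [IsNoetherianRing A] [∀ l μ, FiniteDimensional ℂ (S.jointEigenspace V l μ)]
    (hN : S.IsRootNilpotent V) (hK0 : ∀ v : V, ⁅S.K 1, v⁆ = 0) (hl : l ≠ 0) {μ : ℂ}
    (hU : S.jointEigenspace V l μ ≠ ⊥) :
    ∃ R : Ideal A, IsCofiniteIdeal R ∧ S.Annihilates V R := by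
  obtain ⟨B, hB⟩ := exists_forall_finrank_jointEigenspace_le hN hK0 hl hU
  obtain ⟨I, hI, hIann⟩ := (S.virRep V).exists_ideal_of_bounded
    (fun a _ hu ↦ D_zero_mem_jointEigenspace hu a) (fun j a _ hu ↦ D_mem_jointEigenspace hu j a) hB
  exact exists_annihilates_of_lie_D_eq_zero hI hU
    fun n a ha u hu ↦ VirRep.d_eq_zero_of_mem_ann (hIann n ha) hu

end RootNilpotent

section ZeroWeight

variable (S V) in
/-- The elements `x` of `g̊` for which `x ⊗ ℂ[t,t⁻¹] ⊗ A` acts trivially on `V`. -/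
def trivialIdeal : LieIdeal ℂ g where
  carrier := {x | ∀ n a, ∀ v : V, ⁅S.E n x a, v⁆ = 0}
  add_mem' hx hy n a v := by rw [map_add, LinearMap.add_apply, add_lie, hx, hy, add_zero]
  zero_mem' n a v := by rw [map_zero, LinearMap.zero_apply, zero_lie]
  smul_mem' c x hx n a v := by rw [map_smul, LinearMap.smul_apply, smul_lie, hx, smul_zero]
  lie_mem {y x} hx n a v := by
    have := S.E_E_apply 0 n y x 1 a v
    rw [hx, hx, lie_zero, zero_add, zero_add, one_mul, Int.cast_zero, zero_mul, ite_self,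
      zero_smul, add_zero] at this
    exact this.symm

lemma lie_E_eq_zero_of_forall_weight_eq_zero (hw : S.IsWeightModule V)
    (hl : ∀ l μ, S.jointEigenspace V l μ ≠ ⊥ → l = 0) (h : S.H) (v : V) :
    ⁅S.E 0 (h : g) 1, v⁆ = 0 := by
  suffices hker : LinearMap.ker (toEnd ℂ L V (S.E 0 (h : g) 1)) = ⊤ from
    LinearMap.mem_ker.mp (hker.ge (Submodule.mem_top (x := v)))
  rw [eq_top_iff, ← hw]
  refine iSup_le fun χ w hwχ ↦ ?_
  obtain ⟨l, hlχ⟩ := exists_wtSpace_le_jointEigenspace V χ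
  rcases eq_or_ne (S.jointEigenspace V l (χ S.d0)) ⊥ with hbot | hbot
  · rw [(Submodule.eq_bot_iff _).mp hbot w (hlχ hwχ)]
    exact Submodule.zero_mem _
  · rw [LinearMap.mem_ker, toEnd_apply_apply, (mem_jointEigenspace.mp (hlχ hwχ)).1,
      hl _ _ hbot, LinearMap.zero_apply, zero_smul]

lemma trivialIdeal_eq_top [LieAlgebra.IsSemisimple ℂ g] (hw : S.IsWeightModule V)
    (hl : ∀ l μ, S.jointEigenspace V l μ ≠ ⊥ → l = 0) : S.trivialIdeal V = ⊤ := by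
  have := S.isCartan
  refine eq_top_of_lie_cartan_mem (H := S.H) fun h hh x n a v ↦ ?_
  have := S.E_E_apply 0 n h x 1 a v
  rw [lie_E_eq_zero_of_forall_weight_eq_zero hw hl ⟨h, hh⟩,
    lie_E_eq_zero_of_forall_weight_eq_zero hw hl ⟨h, hh⟩, lie_zero] at this
  simpa using this.symm

lemma eq_bot_or_eq_top_of_generators_stable [IsIrreducible ℂ L V] {W : Submodule ℂ V}
    (hE : ∀ n x a, ∀ w ∈ W, ⁅S.E n x a, w⁆ ∈ W) (hD : ∀ n a, ∀ w ∈ W, ⁅S.D n a, w⁆ ∈ W)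
    (hK : ∀ a, ∀ w ∈ W, ⁅S.K a, w⁆ ∈ W) (hC : ∀ a, ∀ w ∈ W, ⁅S.C a, w⁆ ∈ W) :
    W = ⊥ ∨ W = ⊤ := by
  let stabilizer : Submodule ℂ L :=
    (W.compatibleMaps W).comap (toEnd ℂ L V : L →ₗ[ℂ] End ℂ V)
  have stabilizer_eq_top : stabilizer = ⊤ := S.eq_top_of_generators_mem hE hD hK hC
  let N : LieSubmodule ℂ L V :=
    { W with lie_mem := fun {z w} hw ↦ stabilizer_eq_top.ge (Submodule.mem_top (x := z)) hw }
  exact (eq_bot_or_eq_top N).imp (congrArg LieSubmodule.toSubmodule)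
    (congrArg LieSubmodule.toSubmodule)

lemma irreducible_virRep [IsIrreducible ℂ L V] [Nontrivial g]
    (hE : ∀ n x a, ∀ v : V, ⁅S.E n x a, v⁆ = 0) : (S.virRep V).Irreducible := by
  intro W hW
  refine eq_bot_or_eq_top_of_generators_stable (S := S) (fun n x a w _ ↦ ?_) hW
    (fun a w _ ↦ ?_) fun a w hw ↦ ?_
  · rw [hE]
    exact W.zero_mem
  · rw [lie_K_eq_zero_of_mem_sq (I := ⊤) (fun n x a _ ↦ hE n x a w) (by simp)]
    exact W.zero_mem
  · have C_eq : ⁅S.C a, w⁆ = (2 : ℂ) • (⁅S.D 2 a, ⁅S.D (-2) 1, w⁆⁆ - ⁅S.D (-2) 1, ⁅S.D 2 a, w⁆⁆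
        + (4 : ℂ) • ⁅S.D 0 a, w⁆) := by
      rw [S.D_D_apply, if_pos rfl, mul_one]
      norm_num
      module
    rw [C_eq]
    exact W.smul_mem _ (W.add_mem (W.sub_mem (hW _ _ _ (hW _ _ _ hw)) (hW _ _ _ (hW _ _ _ hw)))
      (W.smul_mem _ (hW _ _ _ hw)))

lemma exists_annihilates_of_forall_weight_eq_zero [IsIrreducible ℂ L V] [Nontrivial g]
    [LieAlgebra.IsSemisimple ℂ g] [IsNoetherianRing A]
    [∀ l μ, FiniteDimensional ℂ (S.jointEigenspace V l μ)] (hw : S.IsWeightModule V)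
    (hl : ∀ l μ, S.jointEigenspace V l μ ≠ ⊥ → l = 0) :
    ∃ R : Ideal A, IsCofiniteIdeal R ∧ S.Annihilates V R := by
  have hE (n x a) (v : V) : ⁅S.E n x a, v⁆ = 0 :=
    (trivialIdeal_eq_top hw hl).ge (LieSubmodule.mem_top x) n a v
  have wt_eq (ν : ℂ) : (S.virRep V).wt ν = S.jointEigenspace V 0 ν := by
    ext v
    simp [VirRep.mem_wt, virRep_d_apply, mem_jointEigenspace, hE]
  have (ν : ℂ) : FiniteDimensional ℂ ((S.virRep V).wt ν) := by
    rw [wt_eq]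
    infer_instance
  have := LieModule.nontrivial_of_isIrreducible ℂ L V
  obtain ⟨l, μ, hμ⟩ := exists_jointEigenspace_ne_bot hw
  obtain rfl := hl l μ hμ
  obtain ⟨v, hv0, I, hI, hIv⟩ := (irreducible_virRep hE).exists_ideal ((wt_eq μ).trans_ne hμ)
  exact ⟨_, finite_quotient_mul (IsNoetherian.noetherian _) hI hI,
    annihilates_sq hv0 (fun n x a _ ↦ hE n x a v) fun n a ha ↦ hIv a ha n⟩

end ZeroWeight

end LoopAffVir

theorem statement16_general
    {g A L : Type*} [LieRing g] [LieAlgebra ℂ g] [FiniteDimensional ℂ g]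
    [LieAlgebra.IsSemisimple ℂ g] [Nontrivial g]
    [CommRing A] [Algebra ℂ A] [IsNoetherianRing A]
    [LieRing L] [LieAlgebra ℂ L]
    (S : LoopAffVir g A L)
    (V : Type*) [AddCommGroup V] [Module ℂ V] [LieRingModule L V] [LieModule ℂ L V]
    [LieModule.IsIrreducible ℂ L V]
    (hw : S.IsWeightModule V) (hfd : S.HasFinDimWeightSpaces V) (hN : S.IsRootNilpotent V)
    (hK0 : ∀ v : V, ⁅S.K 1, v⁆ = 0) :
    ∃ R : Ideal A, IsCofiniteIdeal R ∧ S.Annihilates V R := by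
  obtain ⟨c, hC⟩ := LoopAffVir.exists_lie_C_eq_smul hw
  have := LoopAffVir.finiteDimensional_jointEigenspace hfd hK0 hC
  by_cases! hl : ∀ l μ, S.jointEigenspace V l μ ≠ ⊥ → l = 0
  · exact LoopAffVir.exists_annihilates_of_forall_weight_eq_zero hw hl
  · obtain ⟨l, μ, hU, hl⟩ := hl
    exact LoopAffVir.exists_annihilates_of_weight_ne_zero hN hK0 hl hU

/-- Proposition `mp1`.  Let `V` be an irreducible integrable
`𝔏(A)`-module with finite dimensional weight spaces on which `K ⊗ 1` acts trivially.
Then there is a cofinite ideal `R` of `A` with `(𝔏 ⊗ R) ⬝ V = 0`. -/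
theorem statement16
    {g A L : Type*} [LieRing g] [LieAlgebra ℂ g] [FiniteDimensional ℂ g]
    [LieAlgebra.IsSimple ℂ g]
    [CommRing A] [Algebra ℂ A] [Algebra.FiniteType ℂ A]
    [LieRing L] [LieAlgebra ℂ L]
    (S : LoopAffVir g A L)
    (V : Type*) [AddCommGroup V] [Module ℂ V] [LieRingModule L V] [LieModule ℂ L V]
    (hIrr : IsSimpleOrder (LieSubmodule ℂ L V))
    (hInt : S.IsIntegrable V)
    (hK0 : ∀ v : V, ⁅S.K 1, v⁆ = 0)
    :
    ∃ R : Ideal A, IsCofiniteIdeal R ∧ S.Annihilates V R := by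
  have : IsNoetherianRing A := Algebra.FiniteType.isNoetherianRing ℂ A
  have : Nontrivial g := LieAlgebra.IsSimple.nontrivial ℂ g
  have : LieModule.IsIrreducible ℂ L V := hIrr
  exact statement16_general S V hInt.1 hInt.2.1 hInt.isRootNilpotent hK0
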